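/- arXiv:2001.08079 — 2 statements merged into one kernel-verified Lean document; each statement's English description precedes it below -/
import Mathlib

section
/- Let n and r be positive integers with n ≡ 3 (mod 4). Then, modulo Φ_{n^{2r}}(q)^2 · ∏_{j=1}^{r} Φ_{n^{2j-1}}(q)^2, the sum over k from 0 to (n^{2r}-1)/2 of (1+q^{4k+1})(q^2;q^4)_k^3 / ((1+q)(q^4;q^4)_k^3) · q^k is congruent to [n^{2r}]_{q^2} · (q^3;q^4)_{(n^{2r}-1)/2} / (q^5;q^4)_{(n^{2r}-1)/2} · q^{(1-n^{2r})/2}. -/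
open Polynomial Finset

/-- The variable `q` as an element of the field of rational functions `ℚ(q)`. -/
noncomputable def Q : RatFunc ℚ := RatFunc.X

/-- The q-shifted factorial `(a;b)_k = (1-a)(1-ab)⋯(1-ab^{k-1})` in `ℚ(q)`. -/
noncomputable def qPoch (a b : RatFunc ℚ) (k : ℕ) : RatFunc ℚ :=
  ∏ i ∈ Finset.range k, (1 - a * b ^ i)

section evaluation

variable {K : Type*} [Field K]

/-- Numerator factor. -/
def qA (q : K) (i : ℕ) (u : K) : K := 1 + q ^ (8 * i + 4) - q ^ (4 * i + 2) * u

/-- Denominator factor. -/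
def qB (q : K) (i : ℕ) (u : K) : K := 1 + q ^ (8 * i + 8) - q ^ (4 * i + 4) * u

/-- Coefficient. -/
def qcf (q : K) (k : ℕ) : K :=
  (1 + q ^ (4 * k + 1)) / (1 + q) *
    ((∏ i ∈ range k, (1 - q ^ (4 * i + 2))) / (∏ i ∈ range k, (1 - q ^ (4 * i + 4)))) * q ^ k

/-- Summand. -/
def qg (q : K) (u : K) (k : ℕ) : K :=
  qcf q k * ((∏ i ∈ range k, qA q i u) / ∏ i ∈ range k, qB q i u)

/-- The point. -/
def qu (q : K) (l : ℕ) : K := q ^ l + (q ^ l)⁻¹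

/-- Closed form. -/
def qV (q : K) (m : ℕ) : K :=
  (1 - q ^ (4 * m + 2)) / (1 - q ^ 2) *
    ((∏ i ∈ range m, (1 - q ^ (4 * i + 3))) / (∏ i ∈ range m, (1 - q ^ (4 * i + 5)))) * (q ^ m)⁻¹

theorem qpow_sub_ne {q : K} (h0 : q ≠ 0) (h1 : ∀ i, 0 < i → 1 - q ^ i ≠ 0) {a b : ℕ}
    (hab : a ≠ b) : q ^ a - q ^ b ≠ 0 := by
  rcases lt_or_gt_of_ne hab with h | h
  · have : q ^ a - q ^ b = q ^ a * (1 - q ^ (b - a)) := by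
      rw [mul_sub, ← pow_add, Nat.add_sub_cancel' h.le, mul_one]
    rw [this]; exact mul_ne_zero (pow_ne_zero _ h0) (h1 _ (by omega))
  · have : q ^ a - q ^ b = - (q ^ b * (1 - q ^ (a - b))) := by
      rw [mul_sub, ← pow_add, Nat.add_sub_cancel' h.le, mul_one]; ring
    rw [this]; exact neg_ne_zero.2 (mul_ne_zero (pow_ne_zero _ h0) (h1 _ (by omega)))

theorem qone_add_ne {q : K} (h1 : ∀ i, 0 < i → 1 - q ^ i ≠ 0) {a : ℕ} (ha : 0 < a) :
    1 + q ^ a ≠ 0 := by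
  intro h
  apply h1 (2 * a) (by omega)
  have : 1 - q ^ (2 * a) = (1 - q ^ a) * (1 + q ^ a) := by ring
  rw [this, h, mul_zero]

theorem qA_qu {q : K} (h0 : q ≠ 0) (i l : ℕ) :
    qA q i (qu q l) = (1 - q ^ (4 * i + 2 + l)) * (q ^ l - q ^ (4 * i + 2)) / q ^ l := by
  have := pow_ne_zero l h0
  unfold qA qu
  field_simp
  ring

theorem qB_qu {q : K} (h0 : q ≠ 0) (i l : ℕ) :
    qB q i (qu q l) = (1 - q ^ (4 * i + 4 + l)) * (q ^ l - q ^ (4 * i + 4)) / q ^ l := by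
  have := pow_ne_zero l h0
  unfold qB qu
  field_simp
  ring

theorem qcf_succ {q : K} (h1 : ∀ i, 0 < i → 1 - q ^ i ≠ 0) (k : ℕ) :
    qcf q (k + 1) = qcf q k * ((1 + q ^ (4 * k + 5)) / (1 + q ^ (4 * k + 1)) *
      ((1 - q ^ (4 * k + 2)) / (1 - q ^ (4 * k + 4))) * q) := by
  have e1 := qone_add_ne h1 (a := 1) (by omega)
  have e2 := qone_add_ne h1 (a := 4 * k + 1) (by omega)
  have e3 := h1 (4 * k + 4) (by omega)
  have e4 : ∏ i ∈ range k, (1 - q ^ (4 * i + 4)) ≠ 0 :=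
    prod_ne_zero_iff.2 fun i _ => h1 _ (by omega)
  rw [pow_one] at e1
  unfold qcf
  rw [prod_range_succ, prod_range_succ, show 4 * (k + 1) + 1 = 4 * k + 5 by ring]
  field_simp
  ring

/-- Ratio in `k`. -/
def qr2 (q y z : K) : K :=
  (1 + z * q ^ 5) / (1 + z * q) *
    ((1 - z * q ^ 2) * (1 - y * z * q ^ 4) * (y - z) * q /
      ((1 - z * q ^ 4) * (1 - y * z * q ^ 6) * (y - z * q ^ 2)))

/-- Ratio in `m`. -/
def qr1 (q y z : K) : K :=
  (1 - y * z * q ^ 4) * (1 - y * q ^ 6) * (y * q ^ 2 - z) /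
    ((1 - y * z * q ^ 6) * (y * q ^ 4 - z) * (1 - y * q ^ 2))

theorem qg_succ {q : K} (h0 : q ≠ 0) (h1 : ∀ i, 0 < i → 1 - q ^ i ≠ 0) (m k : ℕ) :
    qg q (qu q (4 * m + 2)) (k + 1) =
      qr2 q (q ^ (4 * m)) (q ^ (4 * k)) * qg q (qu q (4 * m + 2)) k := by
  have e2 := qone_add_ne h1 (a := 4 * k + 1) (by omega)
  have e3 := h1 (4 * k + 4) (by omega)
  have e5 := h1 (4 * k + 4 + (4 * m + 2)) (by omega)
  have e6 := qpow_sub_ne h0 h1 (a := 4 * m + 2) (b := 4 * k + 4) (by omega)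
  have e7 := qpow_sub_ne h0 h1 (a := 4 * m) (b := 4 * k + 2) (by omega)
  have e8 : (1 - q ^ (4 * k + 2)) * (1 - q ^ (4 * k + 2 + (4 * m + 2))) *
      (q ^ (4 * m + 2) - q ^ (4 * k + 2)) / ((1 - q ^ (4 * k + 4)) *
        (1 - q ^ (4 * k + 4 + (4 * m + 2))) * (q ^ (4 * m + 2) - q ^ (4 * k + 4))) * q *
          ((1 + q ^ (4 * k + 5)) / (1 + q ^ (4 * k + 1))) =
      qr2 q (q ^ (4 * m)) (q ^ (4 * k)) := by
    unfold qr2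
    have f1 : q ^ (4 * m + 2) - q ^ (4 * k + 2) = q ^ 2 * (q ^ (4 * m) - q ^ (4 * k)) := by ring
    have f2 : q ^ (4 * m + 2) - q ^ (4 * k + 4) = q ^ 2 * (q ^ (4 * m) - q ^ (4 * k + 2)) := by
      ring
    rw [f1, f2]
    rw [show q ^ (4 * k) * q ^ 5 = q ^ (4 * k + 5) by ring,
      show q ^ (4 * k) * q = q ^ (4 * k + 1) by ring,
      show q ^ (4 * k) * q ^ 2 = q ^ (4 * k + 2) by ring,
      show q ^ (4 * k) * q ^ 4 = q ^ (4 * k + 4) by ring,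
      show q ^ (4 * m) * q ^ (4 * k) * q ^ 4 = q ^ (4 * k + 2 + (4 * m + 2)) by ring,
      show q ^ (4 * m) * q ^ (4 * k) * q ^ 6 = q ^ (4 * k + 4 + (4 * m + 2)) by ring]
    field_simp
  have e9 := pow_ne_zero (4 * m + 2) h0
  rw [← e8]
  unfold qg
  rw [qcf_succ h1, prod_range_succ, prod_range_succ, mul_div_mul_comm, qA_qu h0, qB_qu h0,
    div_div_div_cancel_right₀ e9]
  simp only [div_eq_mul_inv, mul_inv]
  ring

theorem qg_zero {q : K} (h1 : ∀ i, 0 < i → 1 - q ^ i ≠ 0) (u : K) : qg q u 0 = 1 := by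
  have e1 := qone_add_ne h1 (a := 1) (by omega)
  rw [pow_one] at e1
  simp [qg, qcf, e1]

theorem qg_m_succ {q : K} (h0 : q ≠ 0) (h1 : ∀ i, 0 < i → 1 - q ^ i ≠ 0) (m k : ℕ) (hk : k ≤ m) :
    qg q (qu q (4 * (m + 1) + 2)) k =
      qr1 q (q ^ (4 * m)) (q ^ (4 * k)) * qg q (qu q (4 * m + 2)) k := by
  induction k with
  | zero =>
    rw [qg_zero h1, qg_zero h1]
    unfold qr1
    have e1 : 1 - q ^ (4 * m) * 1 * q ^ 6 ≠ 0 := by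
      have := h1 (4 * m + 6) (by omega)
      convert this using 2; ring
    have e2 : 1 - q ^ (4 * m) * q ^ 2 ≠ 0 := by
      have := h1 (4 * m + 2) (by omega)
      convert this using 2; ring
    have e3 : q ^ (4 * m) * q ^ 4 - 1 ≠ 0 := by
      have := h1 (4 * m + 4) (by omega)
      intro h; apply this; linear_combination -h
    rw [mul_zero, pow_zero, mul_one, eq_comm, div_eq_one_iff_eq (by positivity)]
    ring
  | succ k ih =>
    rw [qg_succ h0 h1, qg_succ h0 h1, ih (by omega), ← mul_assoc, ← mul_assoc]
    congr 1
    have e1 := qone_add_ne h1 (a := 4 * k + 1) (by omega)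
    have e2 := h1 (4 * k + 4) (by omega)
    have e3 := h1 (4 * m + 4 * k + 10) (by omega)
    have e4 := h1 (4 * m + 4 * k + 6) (by omega)
    have e5 := h1 (4 * m + 2) (by omega)
    have e6 := qpow_sub_ne h0 h1 (a := 4 * m) (b := 4 * k + 2) (by omega)
    have e7 := qpow_sub_ne h0 h1 (a := 4 * m + 4) (b := 4 * k + 2) (by omega)
    have e8 := qpow_sub_ne h0 h1 (a := 4 * m + 4) (b := 4 * k) (by omega)
    have e9 := qpow_sub_ne h0 h1 (a := 4 * m) (b := 4 * k) (by omega)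
    unfold qr1 qr2
    rw [show 4 * (m + 1) = 4 * m + 4 by ring, show 4 * (k + 1) = 4 * k + 4 by ring]
    simp only [pow_add q] at *
    generalize q ^ (4 * m) = y at *
    generalize q ^ (4 * k) = z at *
    rw [pow_one] at *
    have d1 : 1 - y * q ^ 4 * z * q ^ 6 ≠ 0 := by convert e3 using 2; ring
    have d2 : 1 - y * (z * q ^ 4) * q ^ 6 ≠ 0 := by convert e3 using 2; ring
    have d3 : y * q ^ 4 - z * q ^ 4 ≠ 0 := by
      rw [← sub_mul]; exact mul_ne_zero e9 (pow_ne_zero _ h0)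
    rw [mul_comm, div_mul_div_comm, div_mul_div_comm, div_mul_div_comm, div_mul_div_comm,
      div_eq_div_iff (by positivity) (by positivity)]
    ring

/-- Ratio of closed forms. -/
def qr (q y : K) : K :=
  (1 - y * q ^ 6) * (1 - y * q ^ 3) / ((1 - y * q ^ 2) * (1 - y * q ^ 5) * q)

/-- Certificate. -/
def qR (q y z : K) : K :=
  -((1 - y * q ^ 6) * (1 + y * q ^ 4) * (1 - z * q ^ 2) * (1 - y * z * q ^ 4)) /
    ((1 - y * q ^ 2) * (1 - y * q ^ 5) * q * (1 + z * q) * (1 - y * z * q ^ 6))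

theorem qg_partial {q : K} (h0 : q ≠ 0) (h1 : ∀ i, 0 < i → 1 - q ^ i ≠ 0) (m j : ℕ) (hj : j ≤ m) :
    ∑ k ∈ range (j + 1), (qg q (qu q (4 * (m + 1) + 2)) k -
      qr q (q ^ (4 * m)) * qg q (qu q (4 * m + 2)) k) =
    qR q (q ^ (4 * m)) (q ^ (4 * j)) * qg q (qu q (4 * m + 2)) j := by
  induction j with
  | zero =>
    have e1 := qone_add_ne h1 (a := 1) (by omega)
    have e4 := h1 (4 * m + 6) (by omega)
    have e5 := h1 (4 * m + 2) (by omega)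
    have e6 := h1 (4 * m + 5) (by omega)
    rw [zero_add, sum_range_one, qg_zero h1, qg_zero h1]
    unfold qr qR
    simp only [pow_add q] at *
    generalize q ^ (4 * m) = y at *
    simp only [mul_zero, pow_zero, mul_one, one_mul, pow_one] at *
    field_simp
    ring
  | succ k ih =>
    rw [sum_range_succ, ih (by omega), qg_m_succ h0 h1 _ _ hj, qg_succ h0 h1]
    have e1 := qone_add_ne h1 (a := 4 * k + 1) (by omega)
    have e0 := qone_add_ne h1 (a := 4 * k + 5) (by omega)
    have e2 := h1 (4 * k + 4) (by omega)
    have e3 := h1 (4 * m + 4 * k + 10) (by omega)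
    have e4 := h1 (4 * m + 4 * k + 6) (by omega)
    have e5 := h1 (4 * m + 2) (by omega)
    have e10 := h1 (4 * m + 5) (by omega)
    have e6 := qpow_sub_ne h0 h1 (a := 4 * m) (b := 4 * k + 2) (by omega)
    have e9 := qpow_sub_ne h0 h1 (a := 4 * m) (b := 4 * k) (by omega)
    rw [show 4 * (k + 1) = 4 * k + 4 by ring]
    generalize qg q (qu q (4 * m + 2)) k = G
    simp only [pow_add q] at *
    generalize q ^ (4 * m) = y at *
    generalize q ^ (4 * k) = z at *
    rw [pow_one] at *
    have d2 : 1 - y * (z * q ^ 4) * q ^ 6 ≠ 0 := by convert e3 using 2; ring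
    have d3 : y * q ^ 4 - z * q ^ 4 ≠ 0 := by
      rw [← sub_mul]; exact mul_ne_zero e9 (pow_ne_zero _ h0)
    have d4 : 1 + z * q ^ 4 * q ≠ 0 := by convert e0 using 2; ring
    have key : qR q y z = (qr q y + qR q y (z * q ^ 4) - qr1 q y (z * q ^ 4)) * qr2 q y z := by
      have k1 : qr q y + qR q y (z * q ^ 4) - qr1 q y (z * q ^ 4) =
          -((1 - y * q ^ 6) * (1 + y * q ^ 4) * (1 - z * q ^ 4) * (y - z * q ^ 2)) /
          ((1 - y * q ^ 2) * (1 - y * q ^ 5) * q ^ 2 * (1 + z * q ^ 4 * q) * (y - z)) := by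
        have d5 : qr1 q y (z * q ^ 4) = (1 - y * z * q ^ 8) * (1 - y * q ^ 6) * (y - z * q ^ 2) /
            ((1 - y * (z * q ^ 4) * q ^ 6) * q ^ 2 * (y - z) * (1 - y * q ^ 2)) := by
          unfold qr1
          rw [div_eq_div_iff (by positivity) (by positivity)]
          ring
        rw [d5]
        unfold qr qR
        rw [div_add_div _ _ (by positivity) (by positivity),
          div_sub_div _ _ (by positivity) (by positivity),
          div_eq_div_iff (by positivity) (by positivity)]
        ring
      rw [k1]
      have d6 : 1 + z * q ^ 5 ≠ 0 := e0
      unfold qR qr2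
      rw [div_mul_div_comm, div_mul_div_comm, div_eq_div_iff (by positivity) (by positivity)]
      ring
    rw [key]
    ring

theorem qV_succ {q : K} (m : ℕ) (h1 : ∀ i, 0 < i → 1 - q ^ i ≠ 0) :
    qV q (m + 1) = qr q (q ^ (4 * m)) * qV q m := by
  have e5 := h1 (4 * m + 2) (by omega)
  unfold qV qr
  rw [prod_range_succ, prod_range_succ, mul_div_mul_comm,
    show q ^ (4 * m) * q ^ 6 = q ^ (4 * m + 6) by ring,
    show q ^ (4 * m) * q ^ 3 = q ^ (4 * m + 3) by ring,
    show q ^ (4 * m) * q ^ 2 = q ^ (4 * m + 2) by ring,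
    show q ^ (4 * m) * q ^ 5 = q ^ (4 * m + 5) by ring,
    show 4 * (m + 1) + 2 = 4 * m + 6 by ring, pow_succ q m]
  generalize (∏ i ∈ range m, (1 - q ^ (4 * i + 3))) / (∏ i ∈ range m, (1 - q ^ (4 * i + 5))) = P
  rw [mul_inv]
  simp only [div_eq_mul_inv, mul_inv]
  have : (1 - q ^ (4 * m + 2))⁻¹ * (1 - q ^ (4 * m + 2)) = 1 := inv_mul_cancel₀ e5
  linear_combination (-(1 - q ^ (4 * m + 6)) * (1 - q ^ (4 * m + 3)) * (1 - q ^ (4 * m + 5))⁻¹ *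
    q⁻¹ * (1 - q ^ 2)⁻¹ * P * (q ^ m)⁻¹) * this

theorem qeval {q : K} (h0 : q ≠ 0) (h1 : ∀ i, 0 < i → 1 - q ^ i ≠ 0) (m : ℕ) :
    ∑ k ∈ range (m + 1), qg q (qu q (4 * m + 2)) k = qV q m := by
  induction m with
  | zero =>
    have := h1 2 (by omega)
    rw [zero_add, sum_range_one, qg_zero h1]
    simp [qV, this]
  | succ m ih =>
    have hp := qg_partial h0 h1 m m le_rfl
    rw [sum_sub_distrib, ← mul_sum, ih] at hp
    rw [sum_range_succ, qg_succ h0 h1, qg_m_succ h0 h1 _ _ le_rfl, qV_succ m h1]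
    have key : qR q (q ^ (4 * m)) (q ^ (4 * m)) +
      qr2 q (q ^ (4 * (m + 1))) (q ^ (4 * m)) * qr1 q (q ^ (4 * m)) (q ^ (4 * m)) = 0 := by
      have e1 := qone_add_ne h1 (a := 4 * m + 1) (by omega)
      have e2 := h1 (4 * m + 4) (by omega)
      have e3 := h1 (4 * m + 4 * m + 10) (by omega)
      have e4 := h1 (4 * m + 4 * m + 6) (by omega)
      have e5 := h1 (4 * m + 2) (by omega)
      have e10 := h1 (4 * m + 5) (by omega)
      have e6 := qpow_sub_ne h0 h1 (a := 4 * m + 4) (b := 4 * m + 2) (by omega)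
      have e9 := qpow_sub_ne h0 h1 (a := 4 * m + 4) (b := 4 * m) (by omega)
      unfold qr1 qr2 qR
      rw [show 4 * (m + 1) = 4 * m + 4 by ring]
      simp only [pow_add q] at *
      generalize q ^ (4 * m) = y at *
      rw [pow_one] at *
      have d1 : 1 - y * q ^ 4 * y * q ^ 6 ≠ 0 := by convert e3 using 2; ring
      rw [div_mul_div_comm, div_mul_div_comm,
        div_add_div _ _ (by positivity) (by positivity), div_eq_zero_iff]
      left
      ring
    linear_combination hp + qg q (qu q (4 * m + 2)) m * key

theorem qeval' {q : K} (h0 : q ≠ 0) (h1 : ∀ i, 0 < i → 1 - q ^ i ≠ 0) (m N : ℕ) (hN : m ≤ N) :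
    ∑ k ∈ range (N + 1), qg q (qu q (4 * m + 2)) k = qV q m := by
  have hz : ∀ j, qg q (qu q (4 * m + 2)) (m + 1 + j) = 0 := by
    intro j
    induction j with
    | zero =>
      rw [add_zero, qg_succ h0 h1]
      simp [qr2]
    | succ j ih => rw [← add_assoc, qg_succ h0 h1, ih, mul_zero]
  obtain ⟨d, rfl⟩ := Nat.exists_eq_add_of_le hN
  rw [show m + d + 1 = (m + 1) + d by ring, sum_range_add, qeval h0 h1]
  simp [hz]

end evaluation

section valuation_part

variable {K : Type*} [Field K] {G : Type*} [LinearOrderedCommGroupWithZero G] (v : Valuation K G)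

theorem interp_aux (ρ : G) (hρ : ρ ≠ 0) (u : ℕ → v.integer) (z : v.integer)
    (hu : ∀ i j, i ≠ j → v ((u i : K) - u j) = ρ) (hz : ∀ i, v ((z : K) - u i) = ρ) (s : ℕ) :
    ∀ T : v.integer[X], (∀ i < s, v ((T.eval (u i) : v.integer) : K) ≤ ρ ^ s) →
      v ((T.eval z : v.integer) : K) ≤ ρ ^ s := by
  induction s with
  | zero => intro T _; rw [pow_zero]; exact (T.eval z).2
  | succ s ih =>
    intro T hT
    obtain ⟨T1, h1⟩ := X_sub_C_dvd_sub_C_eval (a := u s) (p := T)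
    have h2 : ∀ w : v.integer, ((T.eval w : v.integer) : K) =
        ((w : K) - u s) * (T1.eval w : v.integer) + (T.eval (u s) : v.integer) := by
      intro w
      have := congrArg (fun P : v.integer[X] => ((P.eval w : v.integer) : K)) h1
      simp only [eval_sub, eval_mul, eval_X, eval_C, AddSubgroupClass.coe_sub, Subring.coe_mul] at this
      linear_combination this
    have h3 : v ((T1.eval z : v.integer) : K) ≤ ρ ^ s := by
      apply ih
      intro i hi
      have h4 : v (((u i : K) - u s) * (T1.eval (u i) : v.integer)) ≤ ρ ^ (s + 1) := by
        rw [show ((u i : K) - u s) * (T1.eval (u i) : v.integer) =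
          (T.eval (u i) : v.integer) - (T.eval (u s) : v.integer) by rw [h2 (u i)]; ring]
        exact (v.map_sub _ _).trans (max_le (hT i (by omega)) (hT s (by omega)))
      rw [map_mul, hu i s (by omega), pow_succ'] at h4
      exact (mul_le_mul_iff_right₀ (zero_lt_iff.2 hρ)).1 h4
    rw [h2 z]
    refine (v.map_add _ _).trans (max_le ?_ (hT s (by omega)))
    rw [map_mul, hz, pow_succ']
    gcongr

variable {v} {q : K} {ϖ : G} {D : ℕ}

theorem v_pow_sub (hq : v q = 1)
    (h1 : ∀ m, 0 < m → v (1 - q ^ m) = if D ∣ m then ϖ else 1) {a b : ℕ} (hab : a < b) :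
    v (q ^ a - q ^ b) = if D ∣ b - a then ϖ else 1 := by
  have : q ^ a - q ^ b = q ^ a * (1 - q ^ (b - a)) := by
    rw [mul_sub, ← pow_add, Nat.add_sub_cancel' hab.le, mul_one]
  rw [this, map_mul, map_pow, hq, one_pow, one_mul, h1 _ (by omega)]

theorem v_prod_one_sub
    (h1 : ∀ m, 0 < m → v (1 - q ^ m) = if D ∣ m then ϖ else 1) (e : ℕ → ℕ) (he : ∀ i, 0 < e i)
    (k : ℕ) :
    v (∏ i ∈ range k, (1 - q ^ e i)) = ϖ ^ (#{i ∈ range k | D ∣ e i}) := by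
  rw [map_prod, prod_congr rfl (fun i _ => h1 (e i) (he i)), prod_ite]
  simp

theorem v_qu_sub (hq : v q = 1) (hD3 : 3 ≤ D)
    (h1 : ∀ m, 0 < m → v (1 - q ^ m) = if D ∣ m then ϖ else 1) {a b : ℕ} (hab : a ≠ b) :
    v (qu q (2 * (a * D)) - qu q (2 * (b * D))) = ϖ ^ 2 := by
  have h0 : q ≠ 0 := by rintro rfl; simp at hq
  wlog h : b < a generalizing a b with H
  · rw [Valuation.map_sub_swap]; exact H hab.symm (by omega)
  have e : qu q (2 * (a * D)) - qu q (2 * (b * D)) =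
      -((q ^ (2 * (b * D)) - q ^ (2 * (a * D))) * (q ^ 0 - q ^ (2 * (a * D) + 2 * (b * D)))
        * (q ^ (2 * (a * D) + 2 * (b * D)))⁻¹ * -1) := by
    unfold qu
    have e1 := pow_ne_zero (2 * (a * D)) h0
    have e2 := pow_ne_zero (2 * (b * D)) h0
    rw [pow_add]
    field_simp
    ring
  have hlt : b * D < a * D := Nat.mul_lt_mul_of_pos_right h (by omega)
  rw [e, Valuation.map_neg, map_mul, Valuation.map_neg, map_one, map_mul, map_mul,
    v_pow_sub hq h1 (by omega), v_pow_sub hq h1 (by omega), map_inv₀, map_pow, hq, if_pos, if_pos]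
  · simp [sq]
  · exact (Dvd.intro_left (2 * a + 2 * b) (by ring_nf; omega))
  · exact (Nat.dvd_sub ⟨2 * a, by ring⟩ ⟨2 * b, by ring⟩)

theorem odd_dvd_four (hD : D % 2 = 1) (i : ℕ) : D ∣ 4 * i ↔ D ∣ i := by
  have : Nat.Coprime D 4 := by
    have : Nat.Coprime D 2 := Nat.coprime_two_right.2 (Nat.odd_iff.2 hD)
    exact Nat.Coprime.pow_right 2 this
  exact this.dvd_mul_left

theorem odd_dvd_two (hD : D % 2 = 1) (i : ℕ) : D ∣ 2 * i ↔ D ∣ i := by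
  have : Nat.Coprime D 2 := Nat.coprime_two_right.2 (Nat.odd_iff.2 hD)
  exact this.dvd_mul_left

theorem v_prod_qB (hq : v q = 1) (hD : D % 2 = 1)
    (h1 : ∀ m, 0 < m → v (1 - q ^ m) = if D ∣ m then ϖ else 1) (a : ℕ) (ha : a = 0 ∨ a % 2 = 1)
    (k : ℕ) :
    v (∏ i ∈ range k, qB q i (qu q (2 * (a * D)))) = (ϖ ^ 2) ^ (k / D) := by
  have h0 : q ≠ 0 := by rintro rfl; simp at hq
  have key : ∀ i, v (qB q i (qu q (2 * (a * D)))) = if D ∣ i + 1 then ϖ ^ 2 else 1 := by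
    intro i
    have hd : D ∣ 2 * (a * D) := ⟨2 * a, by ring⟩
    have hd4 : D ∣ 4 * i + 4 ↔ D ∣ i + 1 := by
      rw [← odd_dvd_four hD (i + 1)]; rfl
    have e1 : v (1 - q ^ (4 * i + 4 + 2 * (a * D))) = if D ∣ i + 1 then ϖ else 1 := by
      simp only [h1 _ (show 0 < 4 * i + 4 + 2 * (a * D) by omega), Nat.dvd_add_left hd, hd4]
    have e2 : v (q ^ (2 * (a * D)) - q ^ (4 * i + 4)) = if D ∣ i + 1 then ϖ else 1 := by
      have hne : 2 * (a * D) ≠ 4 * i + 4 := by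
        rcases ha with rfl | ha
        · omega
        · have : (a * D) % 2 = 1 := by rw [Nat.mul_mod, ha, hD]
          omega
      rcases lt_or_gt_of_ne hne with h | h
      · simp only [v_pow_sub hq h1 h, Nat.dvd_sub_iff_left h.le hd, hd4]
      · rw [Valuation.map_sub_swap, v_pow_sub hq h1 h]
        simp only [Nat.dvd_sub_iff_right h.le hd, hd4]
    rw [qB_qu h0, map_div₀, map_mul, e1, e2, map_pow, hq]
    split_ifs <;> simp [sq]
  rw [map_prod, prod_congr rfl (fun i _ => key i), prod_ite]
  simp [Nat.card_multiples]

theorem card_two_four (hD : D % 2 = 1) (k : ℕ) :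
    #{i ∈ range k | D ∣ 4 * i + 4} ≤ #{i ∈ range k | D ∣ 4 * i + 2} := by
  have key : ∀ i, D ∣ 4 * i + 4 → (D - 1) / 2 ≤ i := by
    intro i hi
    have : D ∣ i + 1 := by rw [← odd_dvd_four hD (i + 1)]; exact hi
    have := Nat.le_of_dvd (by omega) this
    omega
  apply Finset.card_le_card_of_injOn (fun i => i - (D - 1) / 2)
  · intro i hi
    simp only [coe_filter, mem_range, Set.mem_ofPred_eq] at hi ⊢
    have h1 := key i hi.2
    refine ⟨by omega, ?_⟩
    have : 4 * (i - (D - 1) / 2) + 2 = 4 * i + 4 - 2 * D := by omega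
    rw [this]
    exact Nat.dvd_sub hi.2 ⟨2, by ring⟩
  · intro i hi j hj hij
    simp only [coe_filter, mem_range, Set.mem_ofPred_eq] at hi hj hij
    have h1 := key i hi.2
    have h2 := key j hj.2
    omega

theorem v_qcf_le (hq : v q = 1) (hD : D % 2 = 1) (hD3 : 3 ≤ D) (hϖ1 : ϖ ≤ 1)
    (h1 : ∀ m, 0 < m → v (1 - q ^ m) = if D ∣ m then ϖ else 1) (k : ℕ) :
    v (qcf q k) ≤ 1 := by
  have e1 : v (1 + q) = 1 := by
    have a1 := h1 2 (by omega)
    have a2 := h1 1 (by omega)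
    rw [if_neg (fun h => by have := Nat.le_of_dvd (by omega) h; omega)] at a1 a2
    rw [show 1 - q ^ 2 = (1 - q ^ 1) * (1 + q) by ring, map_mul, a2, one_mul] at a1
    exact a1
  have e2 : v (1 + q ^ (4 * k + 1)) ≤ 1 := by
    refine (v.map_add _ _).trans (max_le (by simp) (by simp [hq]))
  unfold qcf
  rw [map_mul, map_mul, map_div₀, map_div₀, e1, div_one, map_pow, hq, one_pow, mul_one,
    v_prod_one_sub h1 (fun i => 4 * i + 2) (by intro i; omega),
    v_prod_one_sub h1 (fun i => 4 * i + 4) (by intro i; omega)]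
  refine mul_le_one' e2 ?_
  refine div_le_one_of_le₀ ?_ zero_le
  exact pow_le_pow_right_of_le_one' hϖ1 (card_two_four hD k)

theorem card_three_five (hD : D % 4 = 3) (m a : ℕ) (h : 2 * m + 1 = a * D) :
    #{i ∈ range m | D ∣ 4 * i + 5} + 1 ≤ #{i ∈ range m | D ∣ 4 * i + 3} := by
  have ha : a % 2 = 1 := by
    have h2 : (a * D) % 2 = 1 := by omega
    rw [Nat.mul_mod] at h2
    rcases Nat.mod_two_eq_zero_or_one a with h3 | h3
    · rw [h3] at h2; simp at h2
    · exact h3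
  have key : ∀ i, D ∣ 4 * i + 5 → 2 * D + 3 ≤ 4 * i + 5 := by
    intro i hi
    obtain ⟨t, ht⟩ := hi
    have h2 : (D * t) % 4 = 1 := by omega
    rw [Nat.mul_mod, hD] at h2
    have : t % 4 = 3 := by omega
    have : D * 3 ≤ D * t := Nat.mul_le_mul_left _ (by omega)
    omega
  have hDm : D ≤ 2 * m + 1 := by
    rw [h]; exact Nat.le_mul_of_pos_left _ (by omega)
  -- the extra index
  have hex : ∃ i0 < m, 4 * i0 + 3 + D = 4 * m + 2 := ⟨(4 * m + 2 - D - 3) / 4, by omega, by omega⟩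
  obtain ⟨i0, hi0, hi0'⟩ := hex
  have hinj : Set.InjOn (fun i => i - (D - 1) / 2)
      (({i ∈ range m | D ∣ 4 * i + 5} : Finset ℕ) : Set ℕ) := by
    intro i hi j hj hij
    simp only [coe_filter, mem_range, Set.mem_ofPred_eq] at hi hj hij
    have h1 := key i hi.2
    have h2 := key j hj.2
    omega
  rw [← card_image_of_injOn hinj, ← card_insert_of_notMem (a := i0)]
  · apply card_le_card
    intro x hx
    simp only [mem_insert, mem_image, mem_filter, mem_range] at hx ⊢
    rcases hx with rfl | ⟨i, hi, rfl⟩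
    · refine ⟨hi0, ?_⟩
      rw [← Nat.dvd_add_left (Nat.dvd_refl D), hi0']
      exact ⟨2 * a, by linarith⟩
    · have h1 := key i hi.2
      refine ⟨by omega, ?_⟩
      have : 4 * (i - (D - 1) / 2) + 3 = 4 * i + 5 - 2 * D := by omega
      rw [this]
      exact Nat.dvd_sub hi.2 ⟨2, by ring⟩
  · simp only [mem_image, mem_filter, mem_range, not_exists, not_and]
    intro i hi hii
    have h1 := key i hi.2
    omega

theorem v_qV (hq : v q = 1) (hD : D % 2 = 1) (hD3 : 3 ≤ D)
    (h1 : ∀ m, 0 < m → v (1 - q ^ m) = if D ∣ m then ϖ else 1) (m : ℕ) (h : D ∣ 2 * m + 1) :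
    v (qV q m) = ϖ * (ϖ ^ (#{i ∈ range m | D ∣ 4 * i + 3}) /
      ϖ ^ (#{i ∈ range m | D ∣ 4 * i + 5})) := by
  unfold qV
  rw [map_mul, map_mul, map_div₀, map_div₀, map_inv₀, map_pow, hq, h1 _ (by omega), h1 _ (by omega),
    if_pos, if_neg, v_prod_one_sub h1 (fun i => 4 * i + 3) (by intro i; omega),
    v_prod_one_sub h1 (fun i => 4 * i + 5) (by intro i; omega)]
  · simp
  · intro h; have := Nat.le_of_dvd (by omega) h; omega
  · rw [show 4 * m + 2 = 2 * (2 * m + 1) by ring]; exact Dvd.dvd.mul_left h 2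

theorem v_qV_le_sq (hq : v q = 1) (hD : D % 4 = 3) (hϖ0 : ϖ ≠ 0) (hϖ1 : ϖ ≤ 1)
    (h1 : ∀ m, 0 < m → v (1 - q ^ m) = if D ∣ m then ϖ else 1) (m : ℕ) (h : D ∣ 2 * m + 1) :
    v (qV q m) ≤ ϖ ^ 2 := by
  rw [v_qV hq (by omega) (by omega) h1 m h, sq]
  refine mul_le_mul_right ?_ ϖ
  rw [div_le_iff₀ (zero_lt_iff.2 (pow_ne_zero _ hϖ0)), ← pow_succ']
  obtain ⟨a, ha⟩ := h
  exact pow_le_pow_right_of_le_one' hϖ1 (card_three_five hD m a (by rw [ha, mul_comm]))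

theorem v_qV_le_one (hq : v q = 1) (m : ℕ) (hm : 0 < m) (hϖ1 : ϖ ≤ 1)
    (h1 : ∀ j, 0 < j → v (1 - q ^ j) = if (2 * m + 1) ∣ j then ϖ else 1) :
    v (qV q m) ≤ 1 := by
  rw [v_qV hq (by omega) (by omega) h1 m dvd_rfl, ← mul_div_assoc]
  refine div_le_one_of_le₀ ?_ zero_le
  rw [← pow_succ']
  refine pow_le_pow_right_of_le_one' hϖ1 (le_trans ?_ (Nat.le_add_left 1 _))
  rw [card_le_one]
  have key : ∀ i < m, 2 * m + 1 ∣ 4 * i + 5 → 4 * i + 5 = 2 * m + 1 := by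
    rintro i hi ⟨t, ht⟩
    have : t < 2 := by
      by_contra hcon
      have : (2 * m + 1) * 2 ≤ (2 * m + 1) * t := Nat.mul_le_mul_left _ (by omega)
      omega
    interval_cases t <;> omega
  intro i hi j hj
  simp only [mem_filter, mem_range] at hi hj
  have := key i hi.1 hi.2
  have := key j hj.1 hj.2
  omega

theorem exists_T (k : ℕ) (hq : v q = 1) (hc : ∀ k, v (qcf q k) ≤ 1) (c : K) (hcc : v c ≤ 1) :
    ∃ T : v.integer[X], ∀ w : v.integer, (∀ i, qB q i (w : K) ≠ 0) →
      ((T.eval w : v.integer) : K) =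
        (∏ i ∈ range k, qB q i (w : K)) * (∑ j ∈ range (k + 1), qg q (w : K) j - c) := by
  let Q : v.integer := ⟨q, by rw [Valuation.mem_integer_iff, hq]⟩
  let cf : ℕ → v.integer := fun j => ⟨qcf q j, hc j⟩
  let A : ℕ → v.integer[X] := fun i => C (1 + Q ^ (8 * i + 4)) - C (Q ^ (4 * i + 2)) * X
  let B : ℕ → v.integer[X] := fun i => C (1 + Q ^ (8 * i + 8)) - C (Q ^ (4 * i + 4)) * X
  have hA : ∀ i (w : v.integer), (((A i).eval w : v.integer) : K) = qA q i (w : K) := by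
    intro i w
    simp [A, Q, qA]
  have hB : ∀ i (w : v.integer), (((B i).eval w : v.integer) : K) = qB q i (w : K) := by
    intro i w
    simp [B, Q, qB]
  refine ⟨∑ j ∈ range (k + 1), C (cf j) * (∏ i ∈ range j, A i) * (∏ i ∈ Ico j k, B i) -
    C (⟨c, hcc⟩ : v.integer) * ∏ i ∈ range k, B i, ?_⟩
  intro w hw
  have : (((∑ j ∈ range (k + 1), C (cf j) * (∏ i ∈ range j, A i) * (∏ i ∈ Ico j k, B i) -
    C (⟨c, hcc⟩ : v.integer) * ∏ i ∈ range k, B i).eval w : v.integer) : K) =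
    ∑ j ∈ range (k + 1), qcf q j * (∏ i ∈ range j, qA q i (w : K)) *
      (∏ i ∈ Ico j k, qB q i (w : K)) - c * ∏ i ∈ range k, qB q i (w : K) := by
    simp only [eval_sub, eval_finsetSum, eval_mul, eval_C, eval_prod, AddSubgroupClass.coe_sub,
      Subring.coe_mul, AddSubmonoidClass.coe_finsetSum, SubmonoidClass.coe_finsetProd, hA, hB, cf]
  rw [this, mul_sub, mul_comm c, mul_sum]
  congr 1
  apply sum_congr rfl
  intro j hj
  have hj' : j ≤ k := by simpa [Nat.lt_succ_iff] using hj
  unfold qg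
  rw [← prod_range_mul_prod_Ico _ hj']
  have : ∏ i ∈ range j, qB q i (w : K) ≠ 0 := prod_ne_zero_iff.2 fun i _ => hw i
  field_simp

theorem v_main (hq : v q = 1) (hD : D % 2 = 1) (hD3 : 3 ≤ D) (hϖ0 : ϖ ≠ 0) (hϖ1 : ϖ ≤ 1)
    (h1 : ∀ m, 0 < m → v (1 - q ^ m) = if D ∣ m then ϖ else 1) (m : ℕ) (hm : D ∣ 2 * m + 1)
    (c : K) (hcc : v c ≤ 1)
    (hV : ∀ m', m' ≤ m → D ∣ 2 * m' + 1 → v (qV q m' - c) ≤ ϖ ^ 2) :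
    v (∑ k ∈ range (m + 1), qg q 2 k - c) ≤ ϖ ^ 2 := by
  have h0 : q ≠ 0 := by rintro rfl; simp at hq
  have hne : ∀ i, 0 < i → 1 - q ^ i ≠ 0 := by
    intro i hi h
    have := h1 i hi
    rw [h, map_zero] at this
    split_ifs at this
    · exact hϖ0 this.symm
    · exact zero_ne_one this
  obtain ⟨T, hT⟩ := exists_T m hq (v_qcf_le hq hD hD3 hϖ1 h1) c hcc
  have hint : ∀ l, v (qu q l) ≤ 1 := by
    intro l
    exact (v.map_add _ _).trans (max_le (by simp [hq]) (by simp [hq]))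
  let U : ℕ → v.integer := fun a => ⟨qu q (2 * (a * D)), hint _⟩
  have hBne : ∀ a, (a = 0 ∨ a % 2 = 1) → ∀ i, qB q i (U a : K) ≠ 0 := by
    intro a ha i
    have := v_prod_qB hq hD h1 a ha (i + 1)
    intro h
    have h2 : ∏ i ∈ range (i + 1), qB q i (qu q (2 * (a * D))) = 0 := by
      rw [prod_range_succ]; change _ * qB q i (U a : K) = 0; rw [h, mul_zero]
    rw [h2, map_zero] at this
    exact pow_ne_zero _ (pow_ne_zero _ hϖ0) this.symm
  have hmain := interp_aux v (ϖ ^ 2) (pow_ne_zero _ hϖ0) (fun t => U (2 * t + 1)) (U 0)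
    (fun i j hij => v_qu_sub hq hD3 h1 (by omega)) (fun i => v_qu_sub hq hD3 h1 (by omega)) (m / D + 1) T
    (by
      intro t ht
      have hle : (2 * t + 1) * D ≤ 2 * m + 1 := by
        obtain ⟨M, hM⟩ := hm
        have a1 : t * D ≤ m := (Nat.mul_le_mul_right D (by omega)).trans (Nat.div_mul_le_self m D)
        have a2 : (2 * t) * D < M * D := by
          rw [mul_comm M, ← hM]; linarith
        have a3 := Nat.lt_of_mul_lt_mul_right a2
        rw [hM, mul_comm D]
        exact Nat.mul_le_mul_right D a3
      have hodd : ((2 * t + 1) * D) % 2 = 1 := by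
        rw [Nat.mul_mod, hD]; omega
      obtain ⟨m', hm'⟩ : ∃ m', (2 * t + 1) * D = 2 * m' + 1 := ⟨(2 * t + 1) * D / 2, by omega⟩
      rw [hT _ (hBne _ (Or.inr (by omega))), map_mul]
      change v (∏ i ∈ range m, qB q i (qu q (2 * ((2 * t + 1) * D)))) *
        v (∑ j ∈ range (m + 1), qg q (qu q (2 * ((2 * t + 1) * D))) j - c) ≤ _
      rw [v_prod_qB hq hD h1 _ (Or.inr (by omega)), pow_succ (ϖ ^ 2)]
      refine mul_le_mul_right ?_ _
      rw [hm', show 2 * (2 * m' + 1) = 4 * m' + 2 by ring, qeval' h0 hne _ _ (by omega)]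
      exact hV m' (by omega) ⟨2 * t + 1, by rw [← hm', mul_comm]⟩)
  rw [hT _ (hBne 0 (Or.inl rfl)), map_mul] at hmain
  change v (∏ i ∈ range m, qB q i (qu q (2 * (0 * D)))) *
        v (∑ j ∈ range (m + 1), qg q (qu q (2 * (0 * D))) j - c) ≤ _ at hmain
  rw [v_prod_qB hq hD h1 0 (Or.inl rfl), pow_succ (ϖ ^ 2)] at hmain
  have hu0 : qu q (2 * (0 * D)) = 2 := by
    simp [qu]; norm_num
  rw [hu0] at hmain
  exact (mul_le_mul_iff_right₀ (zero_lt_iff.2 (pow_ne_zero _ (pow_ne_zero _ hϖ0)))).1 hmain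

end valuation_part

section cyclo

theorem cyclo_not_dvd {D m : ℕ} (hD : 0 < D) (hm : 0 < m) (h : ¬ D ∣ m) :
    ¬ cyclotomic D ℚ ∣ X ^ m - 1 := by
  intro hd
  have hirr := cyclotomic.irreducible_rat hD
  rw [← prod_cyclotomic_eq_X_pow_sub_one hm, hirr.prime.dvd_finsetProd_iff] at hd
  obtain ⟨d, hdm, hd⟩ := hd
  have hne : D ≠ d := by rintro rfl; exact h (Nat.dvd_of_mem_divisors hdm)
  exact hirr.not_isUnit ((cyclotomic.isCoprime_rat hne).isUnit_of_dvd' dvd_rfl hd)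

theorem cyclo_sq_not_dvd {D m : ℕ} (hD : 0 < D) (hm : 0 < m) :
    ¬ cyclotomic D ℚ ^ 2 ∣ X ^ m - 1 := by
  intro hd
  have hirr := cyclotomic.irreducible_rat hD
  have hs : Squarefree (X ^ m - 1 : ℚ[X]) :=
    (X_pow_sub_one_separable_iff.2 (by exact_mod_cast hm.ne')).squarefree
  rw [sq] at hd
  exact hirr.not_isUnit (hs _ hd)

theorem cyclo_dvd {D m : ℕ} (h : D ∣ m) : cyclotomic D ℚ ∣ X ^ m - 1 := by
  refine (cyclotomic.dvd_X_pow_sub_one D ℚ).trans ?_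
  obtain ⟨t, rfl⟩ := h
  rw [pow_mul]
  simpa using sub_dvd_pow_sub_pow (X ^ D : ℚ[X]) 1 t

open WithZero in
theorem exists_val (D : ℕ) (hD : 0 < D) :
    ∃ (v : Valuation (RatFunc ℚ) (WithZero (Multiplicative ℤ)))
      (ϖ : WithZero (Multiplicative ℤ)), ϖ ≠ 0 ∧ ϖ ≤ 1 ∧ v RatFunc.X = 1 ∧
      (∀ m, 0 < m → v (1 - RatFunc.X ^ m) = if D ∣ m then ϖ else 1) ∧
      (∀ f : RatFunc ℚ, v f ≤ ϖ ^ 2 → cyclotomic D ℚ ^ 2 ∣ f.num ∧ ¬ cyclotomic D ℚ ∣ f.denom) := by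
  have hirr := cyclotomic.irreducible_rat hD
  have hP0 : cyclotomic D ℚ ≠ 0 := hirr.ne_zero
  let P : IsDedekindDomain.HeightOneSpectrum ℚ[X] :=
    ⟨Ideal.span {cyclotomic D ℚ}, (Ideal.span_singleton_prime hP0).2 hirr.prime,
      by simpa using hP0⟩
  have hmem : ∀ f, f ∈ P.asIdeal ↔ cyclotomic D ℚ ∣ f := fun f => Ideal.mem_span_singleton
  have hmem2 : ∀ f, f ∈ P.asIdeal ^ 2 ↔ cyclotomic D ℚ ^ 2 ∣ f := fun f => by
    change f ∈ Ideal.span {cyclotomic D ℚ} ^ 2 ↔ _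
    rw [Ideal.span_singleton_pow, Ideal.mem_span_singleton]
  have hnX : ¬ cyclotomic D ℚ ∣ (X : ℚ[X]) := by
    intro h
    have h1 : cyclotomic D ℚ ∣ X ^ D := h.trans (dvd_pow_self _ hD.ne')
    have h2 := dvd_sub h1 (cyclotomic.dvd_X_pow_sub_one D ℚ)
    rw [sub_sub_cancel] at h2
    exact hirr.not_isUnit (isUnit_of_dvd_one h2)
  refine ⟨P.valuation (RatFunc ℚ), exp (-1 : ℤ), exp_ne_zero, ?_, ?_, ?_, ?_⟩
  · rw [← exp_zero, exp_le_exp]; norm_num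
  · rw [← RatFunc.algebraMap_X, P.valuation_of_algebraMap,
      IsDedekindDomain.HeightOneSpectrum.intValuation_eq_one_iff, hmem]
    exact hnX
  · intro m hm
    have e : (1 - RatFunc.X ^ m : RatFunc ℚ) = -algebraMap ℚ[X] (RatFunc ℚ) (X ^ m - 1) := by
      simp
    rw [e, Valuation.map_neg, P.valuation_of_algebraMap]
    split_ifs with h
    · have hdv := cyclo_dvd h
      obtain ⟨g, hg⟩ := hdv
      have hgn : ¬ cyclotomic D ℚ ∣ g := by
        rintro ⟨g', rfl⟩
        exact cyclo_sq_not_dvd hD hm ⟨g', by rw [hg]; ring⟩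
      rw [hg, map_mul, P.intValuation_singleton hP0 rfl,
        IsDedekindDomain.HeightOneSpectrum.intValuation_eq_one_iff.2 (by rwa [hmem]), mul_one]
    · rw [IsDedekindDomain.HeightOneSpectrum.intValuation_eq_one_iff, hmem]
      exact cyclo_not_dvd hD hm h
  · intro f hf
    have hcop := f.isCoprime_num_denom
    have hnd : ¬ cyclotomic D ℚ ∣ f.denom → cyclotomic D ℚ ^ 2 ∣ f.num := by
      intro h
      rw [← RatFunc.num_div_denom f, map_div₀, P.valuation_of_algebraMap,
        P.valuation_of_algebraMap,
        (IsDedekindDomain.HeightOneSpectrum.intValuation_eq_one_iff (x := f.denom)).2 (by rwa [hmem]), div_one] at hf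
      rw [← hmem2, ← P.intValuation_le_pow_iff_mem]
      refine hf.trans (le_of_eq ?_)
      rw [← exp_nsmul]; norm_num
    have hden : ¬ cyclotomic D ℚ ∣ f.denom := by
      intro h
      have hnum : ¬ cyclotomic D ℚ ∣ f.num := fun h2 =>
        hirr.not_isUnit (hcop.isUnit_of_dvd' h2 h)
      rw [← RatFunc.num_div_denom f, map_div₀, P.valuation_of_algebraMap,
        P.valuation_of_algebraMap,
        IsDedekindDomain.HeightOneSpectrum.intValuation_eq_one_iff.2 (by rwa [hmem])] at hf
      have h3 := (P.intValuation_lt_one_iff_mem f.denom).2 ((hmem _).2 h)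
      have h0 : 0 < P.intValuation f.denom :=
        zero_lt_iff.2 (P.intValuation_ne_zero _ f.denom_ne_zero)
      have h4 : (1 : WithZero (Multiplicative ℤ)) < 1 / P.intValuation f.denom := by
        rw [lt_div_iff₀ h0, one_mul]; exact h3
      have h5 : (exp (-1 : ℤ) : WithZero (Multiplicative ℤ)) ^ 2 ≤ 1 := by
        rw [← exp_nsmul, ← exp_zero, exp_le_exp]; norm_num
      exact absurd (hf.trans h5) (not_le.2 h4)
    exact ⟨hnd hden, hden⟩

end cyclo

theorem one_sub_Q_ne (i : ℕ) (hi : 0 < i) : 1 - Q ^ i ≠ 0 := by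
  have e : (1 - Q ^ i : RatFunc ℚ) = -algebraMap ℚ[X] (RatFunc ℚ) (X ^ i - 1) := by
    simp [Q]
  rw [e, neg_ne_zero]
  intro h
  have h2 : (X ^ i - 1 : ℚ[X]) = 0 := (map_eq_zero_iff _ (RatFunc.algebraMap_injective ℚ)).1 h
  exact (monic_X_pow_sub_C (1 : ℚ) hi.ne').ne_zero (by simpa using h2)

theorem qPoch_eq (a k : ℕ) : qPoch (Q ^ a) (Q ^ 4) k = ∏ i ∈ range k, (1 - Q ^ (4 * i + a)) := by
  unfold qPoch
  refine prod_congr rfl fun i _ => ?_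
  ring

theorem lhs_term (k : ℕ) :
    (1 + Q ^ (4 * k + 1)) * qPoch (Q ^ 2) (Q ^ 4) k ^ 3 * Q ^ k /
            ((1 + Q) * qPoch (Q ^ 4) (Q ^ 4) k ^ 3) = qg Q 2 k := by
  have hA : ∀ i, qA Q i 2 = (1 - Q ^ (4 * i + 2)) ^ 2 := by intro i; unfold qA; ring
  have hB : ∀ i, qB Q i 2 = (1 - Q ^ (4 * i + 4)) ^ 2 := by intro i; unfold qB; ring
  unfold qg qcf
  simp only [hA, hB, prod_pow]
  rw [qPoch_eq, qPoch_eq]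
  simp only [div_eq_mul_inv, mul_inv]
  ring

theorem rhs_eq (N : ℕ) (hN : N % 2 = 1) :
    (∑ i ∈ Finset.range N, Q ^ (2 * i)) * qPoch (Q ^ 3) (Q ^ 4) ((N - 1) / 2)
            / qPoch (Q ^ 5) (Q ^ 4) ((N - 1) / 2) * (Q ^ ((N - 1) / 2))⁻¹ =
      qV Q ((N - 1) / 2) := by
  have h2 := one_sub_Q_ne 2 (by omega)
  have hg : (∑ i ∈ Finset.range N, Q ^ (2 * i)) = (1 - Q ^ (4 * ((N - 1) / 2) + 2)) / (1 - Q ^ 2) := by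
    rw [eq_div_iff h2, show 4 * ((N - 1) / 2) + 2 = 2 * N by omega, pow_mul]
    simp only [pow_mul]
    have := geom_sum_mul (Q ^ 2) N
    linear_combination -this
  rw [hg, qPoch_eq, qPoch_eq]
  unfold qV
  rw [mul_div_assoc]

theorem main_D (n r D : ℕ) (h : n % 4 = 3) (hr : 0 < r)
    (hD : D = n ^ (2 * r) ∨ ∃ j ∈ Finset.Icc 1 r, D = n ^ (2 * j - 1)) :
    cyclotomic D ℚ ^ 2 ∣ (∑ k ∈ range ((n ^ (2 * r) - 1) / 2 + 1), qg Q 2 k -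
        qV Q ((n ^ (2 * r) - 1) / 2)).num ∧
      ¬ cyclotomic D ℚ ∣ (∑ k ∈ range ((n ^ (2 * r) - 1) / 2 + 1), qg Q 2 k -
        qV Q ((n ^ (2 * r) - 1) / 2)).denom := by
  have hodd : ∀ e, n ^ e % 2 = 1 := by
    intro e
    rw [← Nat.odd_iff]; exact (Nat.odd_iff.2 (by omega)).pow
  have h3 : ∀ e, e ≠ 0 → 3 ≤ n ^ e := fun e he => le_trans (by omega) (Nat.le_self_pow he n)
  have hN3 := h3 (2 * r) (by omega)
  have hNo := hodd (2 * r)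
  set m := (n ^ (2 * r) - 1) / 2 with hm
  have hNm : n ^ (2 * r) = 2 * m + 1 := by omega
  have hDprop : D % 2 = 1 ∧ 3 ≤ D ∧ D ∣ 2 * m + 1 := by
    rcases hD with rfl | ⟨j, hj, rfl⟩
    · exact ⟨hNo, hN3, by rw [hNm]⟩
    · rw [mem_Icc] at hj
      exact ⟨hodd _, h3 _ (by omega), by rw [← hNm]; exact pow_dvd_pow _ (by omega)⟩
  obtain ⟨hD2, hD3, hDm⟩ := hDprop
  obtain ⟨v, ϖ, hϖ0, hϖ1, hq, h1, hfin⟩ := exists_val D (by omega)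
  apply hfin
  rcases hD with hD | ⟨j, hj, hD⟩
  · have hDe : D = 2 * m + 1 := by omega
    refine v_main hq hD2 hD3 hϖ0 hϖ1 h1 m hDm _ ?_ ?_
    · exact v_qV_le_one hq m (by omega) hϖ1 (by rw [← hDe]; exact h1)
    · intro m' hm' hd
      have := Nat.le_of_dvd (by omega) hd
      have : m' = m := by omega
      rw [this]
      change v (qV Q m - qV Q m) ≤ _
      rw [sub_self, map_zero]; exact zero_le
  · have hD4 : D % 4 = 3 := by
      rw [mem_Icc] at hj
      obtain ⟨i, rfl⟩ : ∃ i, j = i + 1 := ⟨j - 1, by omega⟩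
      rw [hD, show 2 * (i + 1) - 1 = 2 * i + 1 by omega, pow_succ, pow_mul, Nat.mul_mod, Nat.pow_mod,
        Nat.pow_mod n, h]
      norm_num
    have hVle : ∀ m', D ∣ 2 * m' + 1 → v (qV Q m') ≤ ϖ ^ 2 := fun m' hd =>
      v_qV_le_sq hq hD4 hϖ0 hϖ1 h1 m' hd
    refine v_main hq hD2 hD3 hϖ0 hϖ1 h1 m hDm _ ?_ ?_
    · exact (hVle m hDm).trans (pow_le_one' hϖ1 2)
    · intro m' _ hd
      exact (v.map_sub _ _).trans (max_le (hVle m' hd) (hVle m hDm))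


/-- For positive integers `n ≡ 3 (mod 4)` and `r`, modulo
`Φ_{n^{2r}}(q)^2 ∏_{j=1}^r Φ_{n^{2j-1}}(q)^2`:
`∑_{k=0}^{(n^{2r}-1)/2} (1+q^{4k+1})(q^2;q^4)_k^3 q^k / ((1+q)(q^4;q^4)_k^3)
 ≡ [n^{2r}]_{q^2} (q^3;q^4)_{(n^{2r}-1)/2} / (q^5;q^4)_{(n^{2r}-1)/2} · q^{(1-n^{2r})/2}`. -/
theorem stmt13 (n r : ℕ) (hn : 0 < n) (hr : 0 < r) (h : n % 4 = 3) :
    ∃ a b : Polynomial ℚ, ¬ (Polynomial.cyclotomic (n ^ (2 * r)) ℚ ∣ b) ∧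
      (∀ j ∈ Finset.Icc 1 r, ¬ (Polynomial.cyclotomic (n ^ (2 * j - 1)) ℚ ∣ b)) ∧
      ((∑ k ∈ Finset.range ((n ^ (2 * r) - 1) / 2 + 1),
          (1 + Q ^ (4 * k + 1)) * qPoch (Q ^ 2) (Q ^ 4) k ^ 3 * Q ^ k /
            ((1 + Q) * qPoch (Q ^ 4) (Q ^ 4) k ^ 3))
        - (∑ i ∈ Finset.range (n ^ (2 * r)), Q ^ (2 * i))
            * qPoch (Q ^ 3) (Q ^ 4) ((n ^ (2 * r) - 1) / 2)
            / qPoch (Q ^ 5) (Q ^ 4) ((n ^ (2 * r) - 1) / 2)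
            * (Q ^ ((n ^ (2 * r) - 1) / 2))⁻¹)
        * algebraMap (Polynomial ℚ) (RatFunc ℚ) b
      = algebraMap (Polynomial ℚ) (RatFunc ℚ)
          (Polynomial.cyclotomic (n ^ (2 * r)) ℚ ^ 2
            * (∏ j ∈ Finset.Icc 1 r, Polynomial.cyclotomic (n ^ (2 * j - 1)) ℚ ^ 2) * a) := by
  have hodd : n ^ (2 * r) % 2 = 1 := by
    rw [← Nat.odd_iff]; exact (Nat.odd_iff.2 (by omega)).pow
  have hn1 : 1 < n := by omega
  rw [sum_congr rfl (fun k _ => lhs_term k), rhs_eq _ hodd]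
  have hmain := fun D => main_D n r D h hr
  generalize (∑ k ∈ range ((n ^ (2 * r) - 1) / 2 + 1), qg Q 2 k -
        qV Q ((n ^ (2 * r) - 1) / 2)) = f at *
  have hprod : (∏ j ∈ Finset.Icc 1 r, cyclotomic (n ^ (2 * j - 1)) ℚ ^ 2) ∣ f.num := by
    apply Finset.prod_dvd_of_coprime
    · intro i hi j hj hij
      simp only [coe_Icc, Set.mem_Icc] at hi hj
      refine (cyclotomic.isCoprime_rat ?_).pow
      intro he
      have := Nat.pow_right_injective hn1 he
      omega
    · intro j hj
      exact (hmain _ (Or.inr ⟨j, hj, rfl⟩)).1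
  have hall : cyclotomic (n ^ (2 * r)) ℚ ^ 2 *
      (∏ j ∈ Finset.Icc 1 r, cyclotomic (n ^ (2 * j - 1)) ℚ ^ 2) ∣ f.num := by
    refine IsCoprime.mul_dvd ?_ (hmain _ (Or.inl rfl)).1 hprod
    apply IsCoprime.prod_right
    intro j hj
    rw [mem_Icc] at hj
    refine (cyclotomic.isCoprime_rat ?_).pow
    intro he
    have := Nat.pow_right_injective hn1 he
    omega
  obtain ⟨a, ha⟩ := hall
  refine ⟨a, f.denom, (hmain _ (Or.inl rfl)).2, fun j hj => (hmain _ (Or.inr ⟨j, hj, rfl⟩)).2, ?_⟩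
  rw [← ha]
  have hd : algebraMap ℚ[X] (RatFunc ℚ) f.denom ≠ 0 := by
    rw [Ne, map_eq_zero_iff _ (RatFunc.algebraMap_injective ℚ)]; exact f.denom_ne_zero
  have := RatFunc.num_div_denom f
  rw [div_eq_iff hd] at this
  exact this.symm
end

section
/- Let p ≡ 3 (mod 4) be a prime and r ≥ 1 an integer. Then the sum over k from 0 to (p^{2r}-1)/2 of ((1/2)_k)^3/(k!)^3 is congruent to p^{2r} · ∏_{k=1}^{(p^{2r}-1)/2} (4k-1)/(4k+1) modulo p^{2r+2} (i.e., the difference of the two rational numbers has p-adic valuation at least 2r+2). -/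
open Finset

/-- The rising factorial (Pochhammer symbol) `(a)_k = a(a+1)⋯(a+k-1)` for `a : ℚ`. -/
def risingFactorial (a : ℚ) (k : ℕ) : ℚ := ∏ i ∈ Finset.range k, (a + i)

noncomputable section Aux

def cf (k : ℕ) : ℚ := risingFactorial (1/2) k / (k.factorial : ℚ) ^ 3

def TT (x : ℚ) (k : ℕ) : ℚ := ∏ i ∈ Finset.range k, (((i:ℚ) - x) * (i + x + 1))

def FF (n : ℕ) (x : ℚ) : ℚ := ∑ k ∈ Finset.range n, cf k * TT x k

def WW (x : ℚ) (k : ℕ) : ℚ := ∏ i ∈ Finset.range k, (((i:ℚ) - x - 2) * (i + x + 1))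

lemma TT_WW (x : ℚ) (k : ℕ) : TT x k * ((x+1)*(x+2)) = WW x k * ((k - 2 - x) * (k - 1 - x)) := by
  induction k with
  | zero => simp [TT, WW]; ring
  | succ k ih =>
    have h1 : TT x (k+1) = TT x k * (((k:ℚ) - x) * (k + x + 1)) := by
      simp [TT, Finset.prod_range_succ]
    have h2 : WW x (k+1) = WW x k * (((k:ℚ) - x - 2) * (k + x + 1)) := by
      simp [WW, Finset.prod_range_succ]
    rw [h1, h2]; push_cast
    linear_combination (((k:ℚ) - x) * (k + x + 1)) * ih

lemma TT_WW2 (x : ℚ) (k : ℕ) :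
    TT (x+2) k * ((x+1)*(x+2)) = WW x k * ((x + 1 + k) * (x + 2 + k)) := by
  induction k with
  | zero => simp [TT, WW]
  | succ k ih =>
    have h1 : TT (x+2) (k+1) = TT (x+2) k * (((k:ℚ) - (x+2)) * (k + (x+2) + 1)) := by
      simp [TT, Finset.prod_range_succ]
    have h2 : WW x (k+1) = WW x k * (((k:ℚ) - x - 2) * (k + x + 1)) := by
      simp [WW, Finset.prod_range_succ]
    rw [h1, h2]; push_cast
    linear_combination (((k:ℚ) - (x+2)) * (k + (x+2) + 1)) * ih

lemma cf_succ (k : ℕ) : cf (k+1) * ((k:ℚ)+1)^3 = cf k * (1/2 + k) := by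
  have : (k.factorial : ℚ) ≠ 0 := by positivity
  have h2 : ((k:ℚ)+1) ≠ 0 := by positivity
  simp only [cf, risingFactorial, Finset.prod_range_succ, Nat.factorial_succ]
  push_cast
  field_simp

lemma FF_tele (n : ℕ) (x : ℚ) :
    ((x+2)^2 * FF n (x+2) - (x+1)^2 * FF n x) * ((x+1)*(x+2))
      = -2 * (2*x+3) * (n:ℚ)^3 * cf n * WW x n := by
  induction n with
  | zero => simp [FF]
  | succ n ih =>
    have e1 : ∀ y, FF (n+1) y = FF n y + cf n * TT y n := by
      intro y; simp [FF, Finset.sum_range_succ]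
    have h2 : WW x (n+1) = WW x n * (((n:ℚ) - x - 2) * (n + x + 1)) := by
      simp [WW, Finset.prod_range_succ]
    rw [e1, e1, h2]; push_cast
    linear_combination ih + (x+2)^2 * cf n * TT_WW2 x n - (x+1)^2 * cf n * TT_WW x n
      + 2 * (2*x+3) * WW x n * (((n:ℚ) - x - 2) * (n + x + 1)) * cf_succ n

lemma FF_rec (n s : ℕ) (h : s + 3 ≤ n) :
    ((s:ℚ)+2)^2 * FF n ((s + 2 : ℕ) : ℚ) = ((s:ℚ)+1)^2 * FF n s := by
  have h1 := FF_tele n s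
  have h2 : WW s n = 0 := by
    apply Finset.prod_eq_zero (i := s + 2) (by simp; omega)
    push_cast; ring
  rw [h2] at h1
  have h3 : ((s:ℚ)+1)*(s+2) ≠ 0 := by positivity
  have h4 := (mul_eq_zero.mp (h1.trans (by ring))).resolve_right h3
  push_cast; linarith

lemma FF_odd (n j : ℕ) (h : 2 * j + 2 ≤ n) : FF n ((2*j+1 : ℕ) : ℚ) = 0 := by
  induction j with
  | zero =>
    obtain ⟨m, rfl⟩ : ∃ m, n = m + 2 := ⟨n - 2, by omega⟩
    have : ∀ k, TT 1 (k+2) = 0 := fun k =>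
      Finset.prod_eq_zero (i := 1) (by simp) (by simp)
    simp [FF, Finset.sum_range_succ', this]
    simp [TT, cf, risingFactorial]; norm_num
  | succ j ih =>
    have h1 := FF_rec n (2*j+1) (by omega)
    rw [ih (by omega)] at h1
    have : (((2*j+1:ℕ):ℚ)+2)^2 ≠ 0 := by positivity
    rw [mul_zero] at h1
    exact (mul_eq_zero.mp h1).resolve_left this

lemma FF_even (n j : ℕ) (h : 2 * j + 1 ≤ n) :
    FF n ((2*j : ℕ) : ℚ) = ((j.centralBinom : ℚ) / 4 ^ j) ^ 2 := by
  induction j with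
  | zero =>
    obtain ⟨m, rfl⟩ : ∃ m, n = m + 1 := ⟨n - 1, by omega⟩
    have : ∀ k, TT 0 (k+1) = 0 := fun k =>
      Finset.prod_eq_zero (i := 0) (by simp) (by simp)
    simp [FF, Finset.sum_range_succ', this]
    simp [TT, cf, risingFactorial]
  | succ j ih =>
    have h1 := FF_rec n (2*j) (by omega)
    rw [ih (by omega)] at h1
    have h0 : (((2*j:ℕ):ℚ)+2)^2 ≠ 0 := by positivity
    apply mul_left_cancel₀ h0
    rw [show 2 * (j+1) = 2*j+2 by ring, h1]
    have h2 : ((j:ℚ)+1) * ((j+1).centralBinom : ℚ) = 2 * (2*j+1) * j.centralBinom := by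
      exact_mod_cast Nat.succ_mul_centralBinom_succ j
    have h3 : (((2*j:ℕ):ℚ)+2) * ((j+1).centralBinom / 4^(j+1)) = (((2*j:ℕ):ℚ)+1) * (j.centralBinom / 4^j) := by
      rw [pow_succ]
      push_cast
      field_simp
      linear_combination 2 * h2
    rw [← mul_pow, ← mul_pow, h3]

/-- Lagrange coefficient -/
def LL (M s : ℕ) : ℚ := ∏ t ∈ (Finset.range (M+1)).erase s,
  ((-1/4 - (t:ℚ)*(t+1)) / ((s:ℚ)*(s+1) - (t:ℚ)*(t+1)))

def node (t : ℕ) : ℚ := (t:ℚ)*(t+1)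

lemma node_inj : Function.Injective node := by
  intro a b h
  simp only [node] at h
  have : ((a:ℚ) - b) * (a + b + 1) = 0 := by linear_combination h
  rcases mul_eq_zero.mp this with h | h
  · exact_mod_cast sub_eq_zero.mp h
  · exfalso; have : (0:ℚ) < a + b + 1 := by positivity
    linarith

open Polynomial in
lemma eval_basis (M s : ℕ) :
    (Lagrange.basis (Finset.range (M+1)) node s).eval (-1/4) = LL M s := by
  simp [Lagrange.basis, Lagrange.basisDivisor, eval_prod, LL, node, -Finset.prod_div_distrib]
  apply Finset.prod_congr rfl
  intro t _; rw [mul_comm, ← div_eq_mul_inv]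

open Polynomial in
lemma sum_LL (M : ℕ) : ∑ s ∈ Finset.range (M+1), LL M s = 1 := by
  have := Lagrange.sum_basis (s := Finset.range (M+1)) (v := node) node_inj.injOn (by simp)
  have := congrArg (eval (-1/4)) this
  simpa [eval_finsetSum, eval_basis] using this

open Polynomial in
lemma interp (M : ℕ) :
    FF (M+1) (-1/2) = ∑ s ∈ Finset.range (M+1), FF (M+1) s * LL M s := by
  let P : ℚ[X] := ∑ k ∈ Finset.range (M+1), C (cf k) *
    ∏ i ∈ Finset.range k, (C ((i:ℚ)*(i+1)) - X)
  have hP : ∀ x : ℚ, P.eval (x*(x+1)) = FF (M+1) x := by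
    intro x
    simp only [P, eval_finsetSum, eval_mul, eval_C, eval_prod, eval_sub, eval_X, FF, TT]
    apply Finset.sum_congr rfl; intro k _
    congr 1
    apply Finset.prod_congr rfl; intro i _; ring
  have hdeg : P.degree < (Finset.range (M+1)).card := by
    rw [Finset.card_range]
    refine lt_of_le_of_lt (degree_sum_le _ _) ?_
    rw [Finset.sup_lt_iff (WithBot.bot_lt_coe _)]
    intro k hk
    have hk := Finset.mem_range.mp hk
    refine lt_of_le_of_lt ((degree_mul_le _ _).trans (add_le_add degree_C_le le_rfl)) ?_
    rw [zero_add]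
    refine lt_of_le_of_lt (degree_prod_le _ _) ?_
    refine lt_of_le_of_lt (Finset.sum_le_card_nsmul _ _ 1 ?_) ?_
    · intro i _
      refine (degree_sub_le _ _).trans (max_le ?_ degree_X_le)
      exact degree_C_le.trans (by simp)
    · simp only [Finset.card_range, nsmul_eq_mul, mul_one]
      exact_mod_cast hk
  have h1 := Lagrange.eq_interpolate (s := Finset.range (M+1)) (v := node) node_inj.injOn hdeg
  have h2 := congrArg (eval (-1/4)) h1
  have h3 := hP (-1/2)
  rw [show (-1/2:ℚ) * (-1/2+1) = -1/4 by norm_num] at h3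
  rw [← h3, h2]
  simp only [Lagrange.interpolate_apply, eval_finsetSum, eval_mul, eval_C, eval_basis]
  apply Finset.sum_congr rfl; intro s _
  rw [← hP]; rfl

lemma FF_half (n : ℕ) : FF n (-1/2) = ∑ k ∈ Finset.range n,
    risingFactorial (1/2) k ^ 3 / (k.factorial : ℚ) ^ 3 := by
  apply Finset.sum_congr rfl
  intro k _
  have : TT (-1/2) k = risingFactorial (1/2) k ^ 2 := by
    simp only [TT, risingFactorial, ← Finset.prod_pow]
    apply Finset.prod_congr rfl; intro i _; ring
  rw [this, cf]; ring

/-- closed form of Lagrange coefficient, factorial form -/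
lemma LL_fact (s d : ℕ) :
    LL (s+d) s * (16^(s+d) * (2*s+1) * (d.factorial * (2*s+d+1).factorial) * ((s+d).factorial:ℚ)^2)
      = (-1)^s * ((2*(s+d)+1).factorial : ℚ)^2 := by
  induction d with
  | zero =>
    have h0 : (Finset.range (s+0+1)).erase s = Finset.range s := by
      ext x; simp; omega
    rw [LL, h0, Finset.prod_div_distrib]
    have hden : ∏ t ∈ Finset.range s, ((s:ℚ)*(s+1) - (t:ℚ)*(t+1)) = (2*s).factorial := by
      have : ∀ t ∈ Finset.range s, ((s:ℚ)*(s+1) - (t:ℚ)*(t+1)) = ((s - t : ℕ) : ℚ) * ((s + 1 + t : ℕ):ℚ) := by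
        intro t ht
        have := Finset.mem_range.mp ht
        rw [Nat.cast_sub this.le]; push_cast; ring
      rw [Finset.prod_congr rfl this, Finset.prod_mul_distrib, ← Nat.cast_prod, ← Nat.cast_prod,
        ← Nat.ascFactorial_eq_prod_range]
      have h3 : ∏ t ∈ Finset.range s, (s - t) = s.factorial := by
        rw [← Finset.prod_range_add_one_eq_factorial, ← Finset.prod_range_reflect]
        apply Finset.prod_congr rfl; intro t ht
        have := Finset.mem_range.mp ht
        omega
      rw [h3, two_mul, ← Nat.factorial_mul_ascFactorial]; push_cast; ring
    have hnum : (∏ t ∈ Finset.range s, (-1/4 - (t:ℚ)*(t+1))) * 16^s * (s.factorial:ℚ)^2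
        = (-1)^s * ((2*s).factorial : ℚ)^2 := by
      clear h0 hden
      induction s with
      | zero => simp
      | succ s ih =>
        rw [Finset.prod_range_succ, show 2*(s+1) = 2*s+1+1 by ring, Nat.factorial_succ (2*s+1),
          Nat.factorial_succ (2*s), Nat.factorial_succ s]
        push_cast
        rw [pow_succ, pow_succ]
        linear_combination (16 * (-1/4 - (s:ℚ)*(s+1)) * (s+1)^2) * ih
    rw [hden]
    have h5 : ((2*s).factorial:ℚ) ≠ 0 := by positivity
    have h6 : ((2*s+1).factorial:ℚ) = (2*s+1) * (2*s).factorial := by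
      rw [Nat.factorial_succ]; push_cast; ring
    simp only [add_zero, Nat.factorial_zero, Nat.cast_one, one_mul, h6]
    generalize ∏ t ∈ Finset.range s, (-1/4 - (t:ℚ)*(t+1)) = Q at hnum ⊢
    field_simp
    linear_combination hnum
  | succ d ih =>
    have h0 : (Finset.range (s+(d+1)+1)).erase s = insert (s+d+1) ((Finset.range (s+d+1)).erase s) := by
      ext x; simp; omega
    have h1 : LL (s+(d+1)) s = ((-1/4 - ((s+d+1:ℕ):ℚ)*((s+d+1:ℕ)+1)) / ((s:ℚ)*(s+1) - ((s+d+1:ℕ):ℚ)*((s+d+1:ℕ)+1))) * LL (s+d) s := by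
      rw [LL, h0, Finset.prod_insert (by simp)]; rfl
    have h2 : ((s:ℚ)*(s+1) - ((s+d+1:ℕ):ℚ)*((s+d+1:ℕ)+1)) = - ((d+1) * (2*s+d+2)) := by
      push_cast; ring
    have h3 : ((d:ℚ)+1) ≠ 0 := by positivity
    have h4 : (2*(s:ℚ)+d+2) ≠ 0 := by positivity
    have h5 : ((-1/4 - ((s+d+1:ℕ):ℚ)*((s+d+1:ℕ)+1)) / ((s:ℚ)*(s+1) - ((s+d+1:ℕ):ℚ)*((s+d+1:ℕ)+1)))
        * (4 * (d+1) * (2*s+d+2)) = (2*(s+d)+3)^2 := by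
      rw [h2]; push_cast; field_simp; ring
    rw [h1]
    generalize ((-1/4 - ((s+d+1:ℕ):ℚ)*((s+d+1:ℕ)+1)) / ((s:ℚ)*(s+1) - ((s+d+1:ℕ):ℚ)*((s+d+1:ℕ)+1))) = R at h5 ⊢
    rw [show 2*s+(d+1)+1 = (2*s+d+1)+1 by ring, show s+(d+1) = (s+d)+1 by ring,
      show 2*(s+d+1)+1 = (2*(s+d)+1)+1+1 by ring]
    rw [Nat.factorial_succ d, Nat.factorial_succ (2*s+d+1), Nat.factorial_succ (s+d),
      Nat.factorial_succ (2*(s+d)+1+1), Nat.factorial_succ (2*(s+d)+1)]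
    rw [pow_succ 16]
    push_cast
    linear_combination (4 * ((s:ℚ)+d+1)^2 * (LL (s+d) s * (16^(s+d) * (2*s+1) * (d.factorial * (2*s+d+1).factorial) * ((s+d).factorial:ℚ)^2))) * h5
      + (4 * ((s:ℚ)+d+1)^2 * (2*(s+d)+3)^2) * ih

lemma LL_choose (s e : ℕ) :
    LL (s+e+1) s * (16^(s+e+1) * (2*s+1) * (e+1)) = (-1)^s * (2*(s+e+1)+1)^2 *
      ((2*(s+e+1)).choose e * (2*(s+e+1)).choose (s+e+1) : ℕ) := by
  have h := LL_fact s (e+1)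
  have h1 := Nat.choose_mul_factorial_mul_factorial (n := 2*(s+e+1)) (k := e) (by omega)
  have h2 := Nat.choose_mul_factorial_mul_factorial (n := 2*(s+e+1)) (k := s+e+1) (by omega)
  rw [show 2*(s+e+1) - e = 2*s+(e+1)+1 by omega] at h1
  rw [show 2*(s+e+1) - (s+e+1) = s+e+1 by omega] at h2
  rw [← add_assoc] at h
  rw [Nat.factorial_succ (2*(s+e+1)), Nat.factorial_succ e] at h
  have h3 : (((e.factorial * (2*s+(e+1)+1).factorial * (s+e+1).factorial^2 : ℕ)) : ℚ) ≠ 0 := by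
    positivity
  apply mul_right_cancel₀ h3

  have h1' : ((2*(s+e+1)).choose e : ℚ) * e.factorial * (2*s+(e+1)+1).factorial = (2*(s+e+1)).factorial := by
    exact_mod_cast h1
  have h2' : ((2*(s+e+1)).choose (s+e+1) : ℚ) * (s+e+1).factorial * (s+e+1).factorial = (2*(s+e+1)).factorial := by
    exact_mod_cast h2
  push_cast at h ⊢
  have h4 : ((2*(s+e+1)).factorial : ℚ)^2 = (((2*(s+e+1)).choose e : ℚ) * e.factorial * (2*s+(e+1)+1).factorial) * (((2*(s+e+1)).choose (s+e+1) : ℚ) * (s+e+1).factorial * (s+e+1).factorial) := by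
    rw [h1', h2']; ring
  linear_combination h + ((-1)^s * (2*((s:ℚ)+e+1)+1)^2) * h4

/-- `x` is `p`-adically divisible by `p ^ n`. -/
def DD (p n : ℕ) (x : ℚ) : Prop := ∃ a b : ℤ, ¬ ((p : ℤ) ∣ b) ∧ x * (b : ℚ) = (p : ℚ) ^ n * (a : ℚ)

section padic

lemma DD_ndvd {p : ℕ} (hp : p.Prime) {a b : ℤ} (ha : ¬ (p:ℤ) ∣ a) (hb : ¬ (p:ℤ) ∣ b) : ¬ (p:ℤ) ∣ a * b := by
  intro h
  rcases (Nat.prime_iff_prime_int.mp hp).dvd_or_dvd h with h | h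
  · exact ha h
  · exact hb h

lemma DD_one {p : ℕ} (hp : p.Prime) : ¬ (p:ℤ) ∣ 1 := (Nat.prime_iff_prime_int.mp hp).not_dvd_one

lemma DD_add {p : ℕ} (hp : p.Prime) {n : ℕ} {x y : ℚ} (hx : DD p n x) (hy : DD p n y) : DD p n (x + y) := by
  obtain ⟨a, b, hb, h1⟩ := hx
  obtain ⟨c, d, hd, h2⟩ := hy
  refine ⟨a * d + c * b, b * d, DD_ndvd hp hb hd, ?_⟩
  push_cast
  linear_combination (d:ℚ) * h1 + (b:ℚ) * h2

lemma DD_mul {p : ℕ} (hp : p.Prime) {n m : ℕ} {x y : ℚ} (hx : DD p n x) (hy : DD p m y) : DD p (n + m) (x * y) := by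
  obtain ⟨a, b, hb, h1⟩ := hx
  obtain ⟨c, d, hd, h2⟩ := hy
  refine ⟨a * c, b * d, DD_ndvd hp hb hd, ?_⟩
  push_cast
  rw [pow_add]
  linear_combination (y * d:ℚ) * h1 + ((p:ℚ)^n * a) * h2

lemma DD_neg {p : ℕ} {n : ℕ} {x : ℚ} (hx : DD p n x) : DD p n (-x) := by
  obtain ⟨a, b, hb, h1⟩ := hx
  refine ⟨-a, b, hb, ?_⟩
  push_cast
  linear_combination -h1

lemma DD_mono {p : ℕ} {n m : ℕ} (h : m ≤ n) {x : ℚ} (hx : DD p n x) : DD p m x := by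
  obtain ⟨a, b, hb, h1⟩ := hx
  obtain ⟨c, rfl⟩ := Nat.exists_eq_add_of_le h
  refine ⟨p ^ c * a, b, hb, ?_⟩
  rw [h1, pow_add]; push_cast; ring

lemma DD_zero {p : ℕ} (hp : p.Prime) (n : ℕ) : DD p n 0 := ⟨0, 1, DD_one hp, by simp⟩

lemma DD_sum {p : ℕ} (hp : p.Prime) {n : ℕ} {ι : Type} (s : Finset ι) (f : ι → ℚ) (h : ∀ i ∈ s, DD p n (f i)) :
    DD p n (∑ i ∈ s, f i) := by
  classical
  induction s using Finset.induction_on with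
  | empty => simpa using DD_zero hp n
  | insert a s ha ih =>
    rw [Finset.sum_insert ha]
    exact DD_add hp (h a (by simp)) (ih fun i hi => h i (by simp [hi]))

lemma DD_prod_one {p : ℕ} (hp : p.Prime) {n : ℕ} {ι : Type} (s : Finset ι) (f : ι → ℚ) (h : ∀ i ∈ s, DD p n (f i - 1)) :
    DD p n (∏ i ∈ s, f i - 1) := by
  classical
  induction s using Finset.induction_on with
  | empty => simpa using DD_zero hp n
  | insert a s ha ih =>
    rw [Finset.prod_insert ha]
    have h1 := h a (by simp)
    have h2 := ih fun i hi => h i (by simp [hi])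
    have h3 := DD_mono (Nat.le_add_right n n) (DD_mul hp h1 h2)
    have := DD_add hp (DD_add hp h1 h2) h3
    convert this using 1; ring

lemma DD_inv {p : ℕ} (hp : p.Prime) {B : ℚ} (h : DD p 2 B) : DD p 0 ((1 - B)⁻¹) := by
  obtain ⟨a, b, hb, h1⟩ := h
  have hn : ¬ (p:ℤ) ∣ b - p^2 * a := by
    intro h
    apply hb
    have : (p:ℤ) ∣ p^2 * a := Dvd.dvd.mul_right (dvd_pow_self _ (by norm_num)) _
    exact (Int.dvd_iff_dvd_of_dvd_sub h).mpr this
  refine ⟨b, b - p^2 * a, hn, ?_⟩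
  have h0 : (b : ℚ) ≠ 0 := by
    intro h; apply hb; have : b = 0 := by exact_mod_cast h
    simp [this]
  have h2 : ((b - p^2 * a : ℤ) : ℚ) = (1 - B) * b := by
    push_cast; linear_combination h1
  have h3 : (1 - B) ≠ 0 := by
    intro h; rw [h, zero_mul] at h2
    have : b - p^2*a = 0 := by exact_mod_cast h2
    exact hn (by simp [this])
  rw [h2]; field_simp

lemma DD_frac {p : ℕ} (hp : p.Prime) (n a : ℕ) (h0 : 0 < a) (h : a < p ^ n) : DD p 1 ((p:ℚ)^n / a) := by
  obtain ⟨v, u, hu, rfl⟩ := Nat.exists_eq_pow_mul_and_not_dvd h0.ne' p hp.ne_one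
  have hv : v < n := by
    by_contra hc
    have h1 : p^n ≤ p^v := Nat.pow_le_pow_right hp.pos (by omega)
    have : 0 < u := Nat.pos_of_ne_zero (by rintro rfl; simp at hu)
    nlinarith
  obtain ⟨c, rfl⟩ : ∃ c, n = v + 1 + c := ⟨n - v - 1, by omega⟩
  refine ⟨p^c, u, by exact_mod_cast hu, ?_⟩
  have h1 : (p:ℚ) ≠ 0 := by exact_mod_cast hp.ne_zero
  have h2 : (u:ℚ) ≠ 0 := by rintro h; simp at h; simp [h] at hu
  push_cast
  field_simp
  ring

lemma DD_central {p : ℕ} (hp : p.Prime) (h : p % 4 = 3) (v j : ℕ) (hv : p ^ v ∣ 4 * j + 1) :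
    p ^ ((v + 1) / 2) ∣ j.centralBinom := by
  have : Fact p.Prime := ⟨hp⟩
  rw [padicValNat_dvd_iff_le (Nat.centralBinom_ne_zero j), Nat.centralBinom, two_mul,
    padicValNat_choose' (b := Nat.log p (j + j) + 1 + v + 1) (by omega)]
  have himg : ((Finset.range ((v+1)/2)).image (fun i => 2*i+1)).card = (v+1)/2 := by
    rw [Finset.card_image_of_injective _ (fun a b h => by simpa using h), Finset.card_range]
  rw [← himg]
  apply Finset.card_le_card
  intro i hi
  simp only [Finset.mem_image, Finset.mem_range] at hi
  obtain ⟨t, ht, rfl⟩ := hi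
  simp only [Finset.mem_filter, Finset.mem_Ico]
  refine ⟨by omega, ?_⟩
  have hd : p ^ (2*t+1) ∣ 4 * j + 1 := (pow_dvd_pow p (by omega)).trans hv
  have h4 : p ^ (2*t+1) % 4 = 3 := by
    rw [pow_succ, pow_mul, Nat.mul_mod, Nat.pow_mod (p^2), Nat.pow_mod p, h]; simp
  have hpos : 0 < p ^ (2*t+1) := pow_pos hp.pos _
  generalize p ^ (2*t+1) = q at hd h4 hpos ⊢
  have hlt := Nat.mod_lt j hpos
  have hd2 : q ∣ 4 * (j % q) + 1 := by
    have e : 4 * j + 1 = q * (4 * (j / q)) + (4 * (j % q) + 1) := by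
      have := Nat.div_add_mod j q
      nlinarith
    rw [e] at hd
    exact (Nat.dvd_add_right (Dvd.intro _ rfl)).mp hd
  obtain ⟨c, hc⟩ := hd2
  generalize j % q = y at hc hlt ⊢
  have hc4 : c < 4 := by
    by_contra hh
    have : q * 4 ≤ q * c := Nat.mul_le_mul_left q (by omega)
    omega
  interval_cases c <;> omega

lemma DD_LL {p : ℕ} (hp : p.Prime) (h2 : p ≠ 2) (r M s v u : ℕ) (hN : p ^ (2*r) = 2*M+1) (hs : s < M)
    (hu : ¬ p ∣ u) (hm : 2*s+1 = p^v*u) : v < 2*r ∧ DD p (2*(2*r-v)) (LL M s) := by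
  have hv : v < 2*r := by
    by_contra hc
    have h1 : p^(2*r) ≤ p^v := Nat.pow_le_pow_right hp.pos (by omega)
    have : 0 < u := Nat.pos_of_ne_zero (by rintro rfl; simp at hu)
    nlinarith
  refine ⟨hv, ?_⟩
  obtain ⟨e, rfl⟩ : ∃ e, M = s + e + 1 := ⟨M - s - 1, by omega⟩
  obtain ⟨c, hc⟩ : ∃ c, 2*r = v + 1 + c := ⟨2*r - v - 1, by omega⟩
  have hcop : Nat.Coprime p 2 := (Nat.coprime_primes hp Nat.prime_two).mpr h2
  have he : p^v*u + 2*(e+1) = p^v * (p * p^c) := by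
    rw [← hm, ← mul_assoc, ← pow_succ, ← pow_add, ← hc, hN]; ring
  have hd : p^v ∣ 2*(e+1) := by
    have : p^v ∣ p^v*u + 2*(e+1) := he ▸ Dvd.intro _ rfl
    exact (Nat.dvd_add_right (Dvd.intro _ rfl)).mp this
  obtain ⟨w, hw⟩ := (Nat.Coprime.pow_left v hcop).dvd_of_dvd_mul_left hd
  have hpv : 0 < p^v := pow_pos hp.pos _
  have hw2 : ¬ p ∣ w := by
    intro hpw
    apply hu
    have e1 : u + 2 * w = p * p^c := by
      apply Nat.eq_of_mul_eq_mul_left hpv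
      rw [← he, hw]; ring
    have : p ∣ u + 2*w := e1 ▸ Dvd.intro _ rfl
    exact (Nat.dvd_add_left (Dvd.dvd.mul_left hpw 2)).mp this
  have hL := LL_choose s e
  have hN' : (2*((s:ℚ)+e+1)+1) = p^v * p^(2*r-v) := by
    rw [← pow_add, show v + (2*r-v) = 2*r by omega]
    exact_mod_cast hN.symm
  have hm' : 2*(s:ℚ)+1 = p^v*u := by exact_mod_cast hm
  have hw' : (e:ℚ)+1 = p^v*w := by exact_mod_cast hw
  rw [hN', hm', hw'] at hL
  have hp16 : ¬ p ∣ 16^(s+e+1) := by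
    intro hh
    have h1 := hp.dvd_of_dvd_pow hh
    rw [show 16 = 2^4 by norm_num] at h1
    exact h2 ((Nat.prime_dvd_prime_iff_eq hp Nat.prime_two).mp (hp.dvd_of_dvd_pow h1))
  refine ⟨(-1)^s * ((2*(s+e+1)).choose e * (2*(s+e+1)).choose (s+e+1) : ℕ),
    ((16^(s+e+1) * u * w : ℕ) : ℤ), ?_, ?_⟩
  · intro hh
    have hh : p ∣ 16^(s+e+1) * u * w := by exact_mod_cast hh
    rcases hp.dvd_mul.mp hh with h | h
    · rcases hp.dvd_mul.mp h with h | h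
      · exact hp16 h
      · exact hu h
    · exact hw2 h
  · have hpv' : ((p:ℚ)^v)^2 ≠ 0 := by
      have : (p:ℚ) ≠ 0 := by exact_mod_cast hp.ne_zero
      positivity
    apply mul_left_cancel₀ hpv'
    rw [mul_comm 2, pow_mul _ _ 2]
    push_cast at hL ⊢
    linear_combination hL

lemma DD_FF {p : ℕ} (hp : p.Prime) (h : p % 4 = 3) (n j v : ℕ) (hj : 2 * j + 1 ≤ n) (hv : p ^ v ∣ 4 * j + 1) :
    DD p (2 * ((v+1)/2)) (FF n ((2*j:ℕ):ℚ)) := by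
  rw [FF_even n j hj, two_mul, pow_two]
  have : DD p ((v+1)/2) ((j.centralBinom : ℚ) / 4 ^ j) := by
    obtain ⟨a, ha⟩ := DD_central hp h v j hv
    refine ⟨a, 4^j, ?_, ?_⟩
    · intro hh
      have hh : p ∣ 4^j := by exact_mod_cast hh
      have h1 := hp.dvd_of_dvd_pow hh
      rw [show 4 = 2^2 by norm_num] at h1
      have := (Nat.prime_dvd_prime_iff_eq hp Nat.prime_two).mp (hp.dvd_of_dvd_pow h1)
      omega
    · rw [ha]; push_cast; field_simp
  exact DD_mul hp this this

end padic

lemma prod_rhs (l : ℕ) :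
    (4*(l:ℚ)+1) * ∏ k ∈ Finset.Icc 1 (2*l), ((4 * (k : ℚ) - 1) / (4 * (k : ℚ) + 1))
    = ((l.centralBinom : ℚ) / 4 ^ l) ^ 2 * ∏ x ∈ Finset.range l,
      ((1 - ((4*(l:ℚ)+1) / ((4*x+2 : ℕ):ℚ))^2) * (1 - ((4*(l:ℚ)+1) / ((4*x+4 : ℕ):ℚ))^2)⁻¹) := by
  have h1 : ∀ (n : ℕ) (f : ℕ → ℚ), ∏ k ∈ Finset.Icc 1 n, f k = ∏ k ∈ Finset.range n, f (k+1) := by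
    intro n f
    induction n with
    | zero => simp
    | succ n ih => rw [Finset.prod_Icc_succ_top (by omega), Finset.prod_range_succ, ih]
  have h2 : ∀ l : ℕ, (4*(l:ℚ)+1) * ∏ k ∈ Finset.range l, ((4 * ((k+1:ℕ) : ℚ) - 1) / (4 * ((k+1:ℕ) : ℚ) + 1))
      = ∏ k ∈ Finset.range l, ((4*(k:ℚ)+3)/(4*k+1)) := by
    intro l
    induction l with
    | zero => simp
    | succ l ih =>
      rw [Finset.prod_range_succ, Finset.prod_range_succ, ← ih]
      have : 4*(l:ℚ)+1 ≠ 0 := by positivity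
      have : 4*((l:ℚ)+1)+1 ≠ 0 := by positivity
      push_cast
      field_simp
      ring
  have h3 : ∀ l : ℕ, (l.centralBinom : ℚ) / 4 ^ l = ∏ x ∈ Finset.range l, ((4*(x:ℚ)+2)/(4*x+4)) := by
    intro l
    induction l with
    | zero => simp
    | succ l ih =>
      rw [Finset.prod_range_succ, ← ih]
      have h2 : ((l:ℚ)+1) * ((l+1).centralBinom : ℚ) = 2 * (2*l+1) * l.centralBinom := by
        exact_mod_cast Nat.succ_mul_centralBinom_succ l
      have : 4*(l:ℚ)+4 ≠ 0 := by positivity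
      rw [pow_succ]
      field_simp
      linear_combination h2
  rw [h1, two_mul, Finset.prod_range_add, ← mul_assoc, h2, h3, ← Finset.prod_range_reflect,
    ← Finset.prod_pow, ← Finset.prod_mul_distrib, ← Finset.prod_mul_distrib]
  apply Finset.prod_congr rfl
  intro x hx
  have hx := Finset.mem_range.mp hx
  obtain ⟨y, rfl⟩ : ∃ y, l = y + x + 1 := ⟨l - 1 - x, by omega⟩
  rw [show y + x + 1 - 1 - x = y by omega]
  have e1 : (4*(x:ℚ)+2) ≠ 0 := by positivity
  have e2 : (4*(x:ℚ)+4) ≠ 0 := by positivity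
  have e3 : (1 - ((4*((y+x+1:ℕ):ℚ)+1) / ((4*x+4 : ℕ):ℚ))^2) = - ((4*y+1)*(4*y+8*x+9)) / (4*x+4)^2 := by
    push_cast; field_simp; ring
  have e4 : (1 - ((4*((y+x+1:ℕ):ℚ)+1) / ((4*x+2 : ℕ):ℚ))^2) = - ((4*y+3)*(4*y+8*x+7)) / (4*x+2)^2 := by
    push_cast; field_simp; ring
  have e5 : (4*(y:ℚ)+1) ≠ 0 := by positivity
  have e6 : (4*(y:ℚ)+8*x+9) ≠ 0 := by positivity
  have e7 : 4 * ((y + x + 1 + x + 1 : ℕ):ℚ) + 1 = 4*y+8*x+9 := by push_cast; ring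
  have e8 : 4 * ((y + x + 1 + x + 1 : ℕ):ℚ) - 1 = 4*y+8*x+7 := by push_cast; ring
  rw [e3, e4, e7, e8]
  field_simp

end Aux

/-- For a prime `p ≡ 3 (mod 4)` and `r ≥ 1`,
`∑_{k=0}^{(p^{2r}-1)/2} (1/2)_k^3/k!^3 ≡ p^{2r} ∏_{k=1}^{(p^{2r}-1)/2} (4k-1)/(4k+1)
(mod p^{2r+2})`. -/
theorem stmt14 (p r : ℕ) (hp : p.Prime) (h : p % 4 = 3) (hr : 1 ≤ r) :
    ∃ a b : ℤ, ¬ ((p : ℤ) ∣ b) ∧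
      ((∑ k ∈ Finset.range ((p ^ (2 * r) - 1) / 2 + 1),
          risingFactorial (1/2) k ^ 3 / (k.factorial : ℚ) ^ 3)
        - (p : ℚ) ^ (2 * r) * ∏ k ∈ Finset.Icc 1 ((p ^ (2 * r) - 1) / 2),
            ((4 * (k : ℚ) - 1) / (4 * (k : ℚ) + 1))) * (b : ℚ)
      = (p : ℚ) ^ (2 * r + 2) * (a : ℚ) := by
  have hp2 : p ≠ 2 := by rintro rfl; omega
  have h4 : p ^ (2*r) % 4 = 1 := by
    rw [pow_mul, Nat.pow_mod, Nat.pow_mod p, h]; simp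
  obtain ⟨l, hl⟩ : ∃ l, p ^ (2*r) = 4*l+1 := ⟨p^(2*r)/4, by omega⟩
  have hM : (p ^ (2*r) - 1)/2 = 2*l := by omega
  have hq : (p:ℚ)^(2*r) = 4*(l:ℚ)+1 := by exact_mod_cast hl
  rw [hM, ← FF_half, interp]
  have hex : ∀ s, s < 2*l → ∃ v u, ¬ p ∣ u ∧ 2*s+1 = p^v*u := fun s _ =>
    Nat.exists_eq_pow_mul_and_not_dvd (by omega) p hp.ne_one
  -- the Lagrange coefficients
  have hL2 : ∀ s ∈ Finset.range (2*l), DD p 2 (LL (2*l) s) := by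
    intro s hs
    have hs := Finset.mem_range.mp hs
    obtain ⟨v, u, hu, hm⟩ := hex s hs
    obtain ⟨hv, hD⟩ := DD_LL hp hp2 r (2*l) s v u (by omega) hs hu hm
    exact DD_mono (by omega) hD
  have hterm : ∀ s ∈ Finset.range (2*l), DD p (2*r+2) (FF (2*l+1) s * LL (2*l) s) := by
    intro s hs
    have hs := Finset.mem_range.mp hs
    rcases Nat.even_or_odd' s with ⟨j, rfl | rfl⟩
    · obtain ⟨v, u, hu, hm⟩ := hex _ hs
      obtain ⟨hv, hD⟩ := DD_LL hp hp2 r (2*l) _ v u (by omega) hs hu hm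
      have hF := DD_FF hp h (2*l+1) j v (by omega) ⟨u, by omega⟩
      exact DD_mono (by omega) (DD_mul hp hF hD)
    · rw [FF_odd _ _ (by omega), zero_mul]
      exact DD_zero hp _
  have hFM := DD_FF hp h (2*l+1) l (2*r) (by omega) ⟨1, by omega⟩
  rw [show (2*r+1)/2 = r by omega] at hFM
  have hLM : DD p 2 (LL (2*l) (2*l) - 1) := by
    have h1 := sum_LL (2*l)
    rw [Finset.sum_range_succ] at h1
    have h2 := DD_neg (DD_sum hp _ _ hL2)
    convert h2 using 1
    linarith
  have hfr : ∀ a, 0 < a → a < p^(2*r) → DD p 2 (((4*(l:ℚ)+1) / (a:ℚ))^2) := by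
    intro a h0 ha
    have := DD_frac hp (2*r) a h0 ha
    rw [hq] at this
    rw [pow_two]
    exact DD_mul hp this this
  have hprod : DD p 2 (∏ x ∈ Finset.range l,
      ((1 - ((4*(l:ℚ)+1) / ((4*x+2 : ℕ):ℚ))^2) * (1 - ((4*(l:ℚ)+1) / ((4*x+4 : ℕ):ℚ))^2)⁻¹) - 1) := by
    apply DD_prod_one hp
    intro x hx
    have hx := Finset.mem_range.mp hx
    have hA := hfr (4*x+2) (by omega) (by omega)
    have hB := hfr (4*x+4) (by omega) (by omega)
    have hI := DD_inv hp hB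
    have hne : (1 - ((4*(l:ℚ)+1) / ((4*x+4 : ℕ):ℚ))^2) ≠ 0 := by
      have e0 : (((4*x+4 : ℕ):ℚ)) < 4*(l:ℚ)+1 := by
        rw [← hq]; exact_mod_cast (by omega : 4*x+4 < p^(2*r))
      have e1 : (0:ℚ) < ((4*x+4 : ℕ):ℚ) := by positivity
      have e2 : 1 < (4*(l:ℚ)+1) / ((4*x+4 : ℕ):ℚ) := (one_lt_div e1).mpr e0
      nlinarith
    have h3 := DD_mul hp (DD_add hp hB (DD_neg hA)) hI
    convert h3 using 1
    generalize ((4*(l:ℚ)+1) / ((4*x+4 : ℕ):ℚ))^2 = B at hne ⊢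
    field_simp
    ring
  have hR := prod_rhs l
  rw [← FF_even (2*l+1) l (by omega)] at hR
  rw [hq, hR, Finset.sum_range_succ]
  have := DD_add hp (DD_add hp (DD_sum hp _ _ hterm) (DD_mul hp hFM hLM))
    (DD_neg (DD_mul hp hFM hprod))
  change DD p (2*r+2) _
  convert this using 1
  ring
end
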